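/- arXiv:1508.00464 — 2 statements merged into one kernel-verified Lean document; each statement's English description precedes it below -/
import Mathlib

section
/- Let φ : ℝP^{d-1} → ℝP^{d-1} be a continuous map and s ∈ ℝP^{d-1} be such that the orbit {φ^n(s) : n ≥ 1} is dense in ℝP^{d-1}. Then for every Lebesgue measurable set X ⊆ ℝ^d of finite measure, the sequence of successive Steiner symmetrizations (X^{φ(s) φ²(s) … φ^n(s)})_{n≥1} converges in measure (in the metric d₁(A,B) = m(A Δ B)) to X⋆. -/
/-!
The symmetrization in a direction contracts `d₁`, by Fubini along lines and the
one-dimensional estimate `CenAt.volume_symmDiff_le`, and it fixes the centred balls. Hence the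
`d₁`-distance of the iterates to a ball is nonincreasing, convergence along a subsequence is
enough, and inner regularity reduces the claim to compact sets.

For a compact set the iterates `X_n` are `d₁`-precompact: symmetrization is compatible with
thickening (`steiner_thickening`, a consequence of the one-dimensional Brunn–Minkowski
inequality), so the thickenings of `X_n` exceed `X_n` in measure by a uniformly small amount
(`exists_convergent_subseq`). Since the orbit is dense in a compact space, `s` is recurrent
(`exists_recurrence`). Along a subsequence, therefore, `X_{n_k} → Y` and the directions used
tend to `s`. Symmetrization is jointly continuous in the direction and the set
(`tendsto_steiner`), so `X_{n_k + j}` tends to `Y` symmetrized along `φ(s), …, φ^j(s)`.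

The Gaussian weight `∫_X exp (-‖x‖²) dx` increases under symmetrization, strictly unless the
set is fixed up to a null set (`IsSteinerSymmOf.gw_le`). It converges along the iterates, so it
is constant on these limits; hence `Y` is fixed by the symmetrizations along all `φ^j(s)`, and
by density and continuity along every direction. Such a set is a ball (`eq_ball_of_fixed`):
otherwise some line meets both `Y \ B` and `B \ Y` in positive length, whereas the sections of
`Y` and `B` are, up to null sets, nested intervals with the same centre.
-/

open MeasureTheory ProbabilityTheory Filter Topology RealInnerProductSpace

noncomputable section

abbrev Euc (d : ℕ) : Type := EuclideanSpace ℝ (Fin d)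

def IsSteinerSymmOf {d : ℕ} (v : Euc d) (X Y : Set (Euc d)) : Prop :=
  MeasurableSet Y ∧
  ∀ x : Euc d, ⟪x, v⟫ = 0 →
    ({t : ℝ | x + t • v ∈ Y} = Set.univ ∨
      ∃ a : ℝ, {t : ℝ | x + t • v ∈ Y} = Set.Ioo (-a) a) ∧
    volume {t : ℝ | x + t • v ∈ Y} = volume {t : ℝ | x + t • v ∈ X}

def IsSteinerOp {d : ℕ} (op : Metric.sphere (0 : Euc d) 1 → Set (Euc d) → Set (Euc d)) :
    Prop :=
  ∀ (v : Metric.sphere (0 : Euc d) 1) (X : Set (Euc d)), MeasurableSet X →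
    IsSteinerSymmOf (v : Euc d) X (op v X)

def IsSphericalRearrangement {d : ℕ} (star : Set (Euc d) → Set (Euc d)) : Prop :=
  ∀ A : Set (Euc d), MeasurableSet A → volume A < ⊤ →
    (∃ R : ℝ, star A = Metric.ball (0 : Euc d) R) ∧ volume (star A) = volume A

/-- Successive deterministic symmetrizations: `detIter op X u n = X^{u_0 u_1 ⋯ u_n}`. -/
def detIter {α S : Type*} (op : S → α → α) (X : α) (u : ℕ → S) : ℕ → α
  | 0 => op (u 0) X
  | n + 1 => op (u (n + 1)) (detIter op X u n)

section Steiner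

open Set
open scoped symmDiff ENNReal

/-! ### Centred intervals and sections -/

/-- An interval centred at `c`: the whole line, or the possibly empty interval
`(c - a, c + a)`. -/
def CenAt (c : ℝ) (S : Set ℝ) : Prop := S = univ ∨ ∃ a : ℝ, S = Ioo (c - a) (c + a)

lemma CenAt.subset_total {c : ℝ} {S T : Set ℝ} (hS : CenAt c S) (hT : CenAt c T) :
    S ⊆ T ∨ T ⊆ S := by
  rcases hS with rfl | ⟨a, rfl⟩
  · exact Or.inr (subset_univ _)
  rcases hT with rfl | ⟨b, rfl⟩
  · exact Or.inl (subset_univ _)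
  rcases le_total a b with h | h
  · exact Or.inl (Ioo_subset_Ioo (by linarith) (by linarith))
  · exact Or.inr (Ioo_subset_Ioo (by linarith) (by linarith))

lemma CenAt.measurableSet {c : ℝ} {S : Set ℝ} (hS : CenAt c S) : MeasurableSet S := by
  rcases hS with rfl | ⟨a, rfl⟩
  · exact MeasurableSet.univ
  · exact measurableSet_Ioo

lemma CenAt.mono {c : ℝ} {S T : Set ℝ} (hS : CenAt c S) (hT : CenAt c T)
    (h : volume S ≤ volume T) : S ⊆ T := by
  rcases hT with rfl | ⟨b, rfl⟩
  · exact subset_univ _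
  rcases hS with rfl | ⟨a, rfl⟩
  · simp at h
  · rw [Real.volume_Ioo, Real.volume_Ioo] at h
    by_cases ha : a ≤ 0
    · rw [Ioo_eq_empty (by linarith)]; exact empty_subset _
    · have := (ENNReal.ofReal_le_ofReal_iff' ).1 h
      rcases this with h | h
      · exact Ioo_subset_Ioo (by linarith) (by linarith)
      · linarith

lemma CenAt.eq {c : ℝ} {S T : Set ℝ} (hS : CenAt c S) (hT : CenAt c T)
    (h : volume S = volume T) : S = T :=
  (hS.mono hT h.le).antisymm (hT.mono hS h.ge)

/-- Passing to centred intervals of the same length is a contraction on subsets of the line. -/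
lemma CenAt.volume_symmDiff_le {c : ℝ} {S T A B : Set ℝ} (hS : CenAt c S) (hT : CenAt c T)
    (hSA : volume S = volume A) (hTB : volume T = volume B) :
    volume (S ∆ T) ≤ volume (A ∆ B) := by
  wlog hST : S ⊆ T generalizing S T A B
  · rw [symmDiff_comm S, symmDiff_comm A]
    exact this hT hS hTB hSA ((hS.subset_total hT).resolve_left hST)
  rw [Set.symmDiff_def, sdiff_eq_empty.2 hST, empty_union]
  by_cases hfin : volume S = ⊤
  · have : T ⊆ S := hT.mono hS (by rw [hfin]; exact le_top)
    simp [sdiff_eq_empty.2 this]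
  rw [measure_sdiff hST hS.measurableSet.nullMeasurableSet hfin, hSA, hTB]
  exact le_measure_sdiff.trans (measure_mono subset_union_right)

/-- The section of `A` by the line through `x` with direction `v`, as a subset of `ℝ`. -/
def sec {d : ℕ} (v x : Euc d) (A : Set (Euc d)) : Set ℝ := {t : ℝ | x + t • v ∈ A}

lemma measurableSet_sec {d : ℕ} (v x : Euc d) {A : Set (Euc d)} (hA : MeasurableSet A) :
    MeasurableSet (sec v x A) := by
  have : Measurable fun t : ℝ => x + t • v := by fun_prop
  exact this hA

lemma volume_sec_shift {d : ℕ} (v x : Euc d) (A : Set (Euc d)) (c : ℝ) :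
    volume (sec v (x + c • v) A) = volume (sec v x A) := by
  have : sec v (x + c • v) A = (fun t => c + t) ⁻¹' sec v x A := by
    ext t; simp [sec, add_smul, add_assoc]
  rw [this, measure_preimage_add]

lemma unit_inner {d : ℕ} (v : Metric.sphere (0 : Euc d) 1) : ⟪(v : Euc d), (v : Euc d)⟫ = 1 := by
  rw [real_inner_self_eq_norm_sq]; simp

lemma perp {d : ℕ} (v : Metric.sphere (0 : Euc d) 1) (x : Euc d) :
    ⟪x - ⟪x, (v : Euc d)⟫ • (v : Euc d), (v : Euc d)⟫ = 0 := by
  rw [inner_sub_left, real_inner_smul_left, unit_inner]; ring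

/-- The defining property of Steiner symmetrization on an arbitrary base point `x`; the
section is then centred at `-⟪x, v⟫`. -/
lemma IsSteinerSymmOf.sec {d : ℕ} {v : Metric.sphere (0 : Euc d) 1} {X Y : Set (Euc d)}
    (h : IsSteinerSymmOf (v : Euc d) X Y) (x : Euc d) :
    CenAt (-⟪x, (v : Euc d)⟫) (sec (v : Euc d) x Y) ∧
      volume (sec (v : Euc d) x Y) = volume (sec (v : Euc d) x X) := by
  set c := ⟪x, (v : Euc d)⟫
  set p := x - c • (v : Euc d) with hp
  have hx : x = p + c • (v : Euc d) := by simp [hp]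
  obtain ⟨h1, h2⟩ := h.2 p (perp v x)
  constructor
  · have hsec : _root_.sec (v : Euc d) x Y = (fun t => c + t) ⁻¹' _root_.sec (v : Euc d) p Y := by
      ext t; simp [_root_.sec, hx, add_smul, add_assoc]
    rw [hsec]
    rcases h1 with h1 | ⟨a, h1⟩
    · left
      change _ ⁻¹' {t : ℝ | p + t • (v : Euc d) ∈ Y} = _
      rw [h1]; simp
    · right
      refine ⟨a, ?_⟩
      change _ ⁻¹' {t : ℝ | p + t • (v : Euc d) ∈ Y} = _
      rw [h1]
      ext t; simp only [mem_preimage, mem_Ioo]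
      constructor <;> rintro ⟨h, h'⟩ <;> constructor <;> linarith
  · rw [hx, volume_sec_shift, volume_sec_shift]; exact h2

lemma subset_of_sec {d : ℕ} (v : Euc d) {A B : Set (Euc d)}
    (h : ∀ x, sec v x A ⊆ sec v x B) : A ⊆ B := by
  intro y hy
  have : (0 : ℝ) ∈ sec v y B := h y (by simpa [sec] using hy)
  simpa [sec] using this

lemma sec_mono {d : ℕ} (v x : Euc d) {A B : Set (Euc d)} (h : A ⊆ B) :
    sec v x A ⊆ sec v x B := fun _ ht => h ht

lemma IsSteinerSymmOf.mono {d : ℕ} {v : Metric.sphere (0 : Euc d) 1} {X Y X' Y' : Set (Euc d)}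
    (h : IsSteinerSymmOf (v : Euc d) X Y) (h' : IsSteinerSymmOf (v : Euc d) X' Y')
    (hX : X ⊆ X') : Y ⊆ Y' := by
  refine subset_of_sec (v : Euc d) fun x => (h.sec x).1.mono (h'.sec x).1 ?_
  rw [(h.sec x).2, (h'.sec x).2]
  exact measure_mono (sec_mono _ _ hX)

lemma IsSteinerSymmOf.unique {d : ℕ} {v : Metric.sphere (0 : Euc d) 1} {X Y Y' : Set (Euc d)}
    (h : IsSteinerSymmOf (v : Euc d) X Y) (h' : IsSteinerSymmOf (v : Euc d) X Y') : Y = Y' :=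
  (h.mono h' subset_rfl).antisymm (h'.mono h subset_rfl)

/-! ### Integration along lines -/

/-- The slab `0 ≤ ⟪x, v⟫ < 1`. It meets each line of direction `v` in a segment of length one,
so that integrating over it plays the role of integrating over the hyperplane `v^⊥`. -/
def slab {d : ℕ} (v : Euc d) : Set (Euc d) := {x | ⟪x, v⟫ ∈ Ico (0 : ℝ) 1}

lemma measurableSet_slab {d : ℕ} (v : Euc d) : MeasurableSet (slab v) := by
  have : Measurable fun x : Euc d => ⟪x, v⟫ := by fun_prop
  exact this measurableSet_Ico

/-- Fubini along lines of direction `v`. It needs only translation invariance and Tonelli: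
write `1 = ∫ 1_{[0,1)}(⟪x, v⟫ - t) dt` and translate by `t • v`. -/
lemma lintegral_lines {d : ℕ} (v : Metric.sphere (0 : Euc d) 1) {f : Euc d → ℝ≥0∞}
    (hf : Measurable f) :
    ∫⁻ x, f x = ∫⁻ x in slab (v : Euc d), ∫⁻ t : ℝ, f (x + t • (v : Euc d)) := by
  have h1 : ∀ x : Euc d, ∫⁻ t : ℝ, f x * (slab (v : Euc d)).indicator 1 (x - t • (v : Euc d))
      = f x := by
    intro x
    have e : ∀ t : ℝ, (slab (v : Euc d)).indicator (1 : Euc d → ℝ≥0∞) (x - t • (v : Euc d))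
        = (Ioc (⟪x, (v : Euc d)⟫ - 1) ⟪x, (v : Euc d)⟫).indicator 1 t := by
      intro t
      have : x - t • (v : Euc d) ∈ slab (v : Euc d) ↔
          t ∈ Ioc (⟪x, (v : Euc d)⟫ - 1) ⟪x, (v : Euc d)⟫ := by
        simp only [slab, mem_ofPred_eq, mem_Ico, mem_Ioc, inner_sub_left, real_inner_smul_left,
          unit_inner]
        constructor <;> rintro ⟨h, h'⟩ <;> constructor <;> linarith
      by_cases h : t ∈ Ioc (⟪x, (v : Euc d)⟫ - 1) ⟪x, (v : Euc d)⟫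
      · rw [indicator_of_mem h, indicator_of_mem (this.2 h)]; rfl
      · rw [indicator_of_notMem h, indicator_of_notMem (fun h' => h (this.1 h'))]
    simp_rw [e]
    rw [lintegral_const_mul _ (measurable_one.indicator measurableSet_Ioc),
      lintegral_indicator_one measurableSet_Ioc, Real.volume_Ioc]
    simp
  have hm : Measurable fun x : Euc d => (slab (v : Euc d)).indicator (1 : Euc d → ℝ≥0∞) x :=
    measurable_one.indicator (measurableSet_slab _)
  calc ∫⁻ x, f x
      = ∫⁻ x, ∫⁻ t : ℝ, f x * (slab (v : Euc d)).indicator 1 (x - t • (v : Euc d)) := by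
        simp_rw [h1]
    _ = ∫⁻ t : ℝ, ∫⁻ x, f x * (slab (v : Euc d)).indicator 1 (x - t • (v : Euc d)) := by
        apply lintegral_lintegral_swap
        apply Measurable.aemeasurable
        apply Measurable.mul (by fun_prop)
        exact hm.comp (by fun_prop)
    _ = ∫⁻ t : ℝ, ∫⁻ x, f (x + t • (v : Euc d)) * (slab (v : Euc d)).indicator 1 x := by
        congr 1 with t
        rw [← lintegral_add_right_eq_self _ (t • (v : Euc d))]
        simp
    _ = ∫⁻ x, ∫⁻ t : ℝ, f (x + t • (v : Euc d)) * (slab (v : Euc d)).indicator 1 x := by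
        apply lintegral_lintegral_swap
        apply Measurable.aemeasurable
        apply Measurable.mul
        · exact hf.comp (by fun_prop)
        · exact hm.comp (by fun_prop)
    _ = _ := by
        rw [← lintegral_indicator (measurableSet_slab _)]
        congr 1 with x
        by_cases h : x ∈ slab (v : Euc d)
        · simp [h]
        · simp [h]

lemma setLIntegral_lines {d : ℕ} (v : Metric.sphere (0 : Euc d) 1) {f : Euc d → ℝ≥0∞}
    (hf : Measurable f) {A : Set (Euc d)} (hA : MeasurableSet A) :
    ∫⁻ x in A, f x = ∫⁻ x in slab (v : Euc d), ∫⁻ t in sec (v : Euc d) x A,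
      f (x + t • (v : Euc d)) := by
  rw [← lintegral_indicator hA, lintegral_lines v (hf.indicator hA)]
  congr 1 with x
  rw [← lintegral_indicator (measurableSet_sec _ _ hA)]
  rfl

lemma volume_lines {d : ℕ} (v : Metric.sphere (0 : Euc d) 1) {A : Set (Euc d)}
    (hA : MeasurableSet A) :
    volume A = ∫⁻ x in slab (v : Euc d), volume (sec (v : Euc d) x A) := by
  have := setLIntegral_lines v (f := 1) measurable_one hA
  simpa using this

lemma measurable_lines {d : ℕ} (v : Euc d) {f : Euc d → ℝ≥0∞}
    (hf : Measurable f) : Measurable fun x => ∫⁻ t : ℝ, f (x + t • v) := by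
  apply Measurable.lintegral_prod_right' (f := fun p : Euc d × ℝ => f (p.1 + p.2 • v))
  exact hf.comp (by fun_prop)

lemma measurable_set_lines {d : ℕ} (v : Euc d) {f : Euc d → ℝ≥0∞}
    (hf : Measurable f) {A : Set (Euc d)} (hA : MeasurableSet A) :
    Measurable fun x => ∫⁻ t in sec v x A, f (x + t • v) := by
  convert measurable_lines v (hf.indicator hA) using 2 with x
  rw [← lintegral_indicator (measurableSet_sec _ _ hA)]
  rfl

lemma measurable_volume_sec {d : ℕ} (v : Euc d) {A : Set (Euc d)} (hA : MeasurableSet A) :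
    Measurable fun x => volume (sec v x A) := by
  simpa using measurable_set_lines v (f := 1) measurable_one hA

lemma ae_sec_null {d : ℕ} (v : Metric.sphere (0 : Euc d) 1) {A : Set (Euc d)}
    (hA : MeasurableSet A) : volume A = 0 ↔
      ∀ᵐ x ∂(volume.restrict (slab (v : Euc d))), volume (sec (v : Euc d) x A) = 0 := by
  rw [volume_lines v hA, lintegral_eq_zero_iff (measurable_volume_sec _ hA)]
  rfl

lemma sec_symmDiff {d : ℕ} (v x : Euc d) (A B : Set (Euc d)) :
    sec v x (A ∆ B) = sec v x A ∆ sec v x B := rfl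

lemma IsSteinerSymmOf.volume_eq {d : ℕ} {v : Metric.sphere (0 : Euc d) 1} {X Y : Set (Euc d)}
    (h : IsSteinerSymmOf (v : Euc d) X Y) (hX : MeasurableSet X) : volume Y = volume X := by
  rw [volume_lines v hX, volume_lines v h.1]
  congr 1 with x
  exact (h.sec x).2

/-- Steiner symmetrization is a contraction for `d₁`. -/
lemma IsSteinerSymmOf.contract {d : ℕ} {v : Metric.sphere (0 : Euc d) 1}
    {X Y X' Y' : Set (Euc d)}
    (h : IsSteinerSymmOf (v : Euc d) X Y) (h' : IsSteinerSymmOf (v : Euc d) X' Y')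
    (hX : MeasurableSet X) (hX' : MeasurableSet X') :
    volume (Y ∆ Y') ≤ volume (X ∆ X') := by
  rw [volume_lines v (hX.symmDiff hX'), volume_lines v (h.1.symmDiff h'.1)]
  refine lintegral_mono fun x => ?_
  exact (h.sec x).1.volume_symmDiff_le (h'.sec x).1 (h.sec x).2 (h'.sec x).2

/-! ### Balls, bounded sets and thickenings -/

lemma norm_sq_line {d : ℕ} (v : Metric.sphere (0 : Euc d) 1) (x : Euc d) (t : ℝ) :
    ‖x + t • (v : Euc d)‖ ^ 2 = ‖x‖ ^ 2 + 2 * t * ⟪x, (v : Euc d)⟫ + t ^ 2 := by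
  rw [norm_add_sq_real, norm_smul, real_inner_smul_right]
  simp; ring

/-- Balls centred at the origin are fixed by Steiner symmetrization. -/
lemma steiner_ball {d : ℕ} (v : Metric.sphere (0 : Euc d) 1) (R : ℝ) :
    IsSteinerSymmOf (v : Euc d) (Metric.ball 0 R) (Metric.ball 0 R) := by
  refine ⟨measurableSet_ball, fun x hx => ⟨Or.inr ?_, rfl⟩⟩
  by_cases hR : R ≤ 0
  · exact ⟨0, by simp [Metric.ball_eq_empty.2 hR]⟩
  push Not at hR
  refine ⟨√(R ^ 2 - ‖x‖ ^ 2), ?_⟩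
  ext t
  have h := norm_sq_line v x t
  rw [hx] at h
  simp only [mem_ofPred_eq, mem_ball_zero_iff, mem_Ioo]
  rw [← abs_lt, Real.lt_sqrt (abs_nonneg _), sq_abs, ← sq_lt_sq₀ (norm_nonneg _) hR.le, h]
  constructor <;> intro h <;> linarith

/-- The one-dimensional Brunn–Minkowski inequality when one summand is an interval: besides
`A`, the set `C` contains the intervals of length `δ` next to `sSup A` and `sInf A`. -/
lemma volume_add_interval_le {A C : Set ℝ} {δ : ℝ} (hδ : 0 ≤ δ) (hA : A.Nonempty)
    (hb : BddBelow A) (ha : BddAbove A) (h : ∀ t ∈ A, ∀ r, |r| ≤ δ → t + r ∈ C) :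
    volume A + ENNReal.ofReal (2 * δ) ≤ volume C := by
  set I := Ioo (sSup A) (sSup A + δ)
  set J := Ioo (sInf A - δ) (sInf A)
  have hIJ : Disjoint I J := by
    rw [Set.disjoint_left]
    intro t ht ht'
    have := Real.sInf_le_sSup A hb ha
    linarith [ht.1, ht'.2]
  have hAIJ : Disjoint A (I ∪ J) := by
    rw [Set.disjoint_left]
    rintro t ht (h | h)
    · linarith [le_csSup ha ht, h.1]
    · linarith [csInf_le hb ht, h.2]
  have hsub : A ∪ (I ∪ J) ⊆ C := by
    rintro t (ht | ht | ht)
    · simpa using h t ht 0 (by simpa using hδ)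
    · obtain ⟨s, hs, hst⟩ := exists_lt_of_lt_csSup hA (show t - δ < sSup A by linarith [ht.2])
      have := h s hs (t - s) (by
        rw [abs_le]; constructor <;> linarith [le_csSup ha hs, ht.1])
      simpa using this
    · obtain ⟨s, hs, hst⟩ := exists_lt_of_csInf_lt hA (show sInf A < t + δ by linarith [ht.1])
      have := h s hs (t - s) (by
        rw [abs_le]; constructor <;> linarith [csInf_le hb hs, ht.2])
      simpa using this
  refine le_trans (le_of_eq ?_) (measure_mono hsub)
  rw [measure_union hAIJ (measurableSet_Ioo.union measurableSet_Ioo),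
    measure_union hIJ measurableSet_Ioo, Real.volume_Ioo, Real.volume_Ioo,
    ← ENNReal.ofReal_add (by linarith) (by linarith)]
  congr 2; ring

/-- Steiner symmetrization of a bounded set is compatible with thickening: for `x ∈ A'` and `y`
at distance less than `r`, the section of `B` through `y` contains that of `A` through `x`
enlarged by the offset `δ` of `y` from `x` along `v`. -/
lemma steiner_thickening {d : ℕ} {v : Metric.sphere (0 : Euc d) 1} {A B A' B' : Set (Euc d)}
    {r : ℝ} (hA : IsSteinerSymmOf (v : Euc d) A A') (hB : IsSteinerSymmOf (v : Euc d) B B')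
    (hbd : Bornology.IsBounded A) (h : ∀ x ∈ A, ∀ y, dist y x < r → y ∈ B) :
    ∀ x ∈ A', ∀ y, dist y x < r → y ∈ B' := by
  intro x hx y hy
  set s := ⟪x, (v : Euc d)⟫ with hs
  set s' := ⟪y, (v : Euc d)⟫ with hs'
  set p := x - s • (v : Euc d) with hp
  set q := y - s' • (v : Euc d) with hq
  have hpv : ⟪p, (v : Euc d)⟫ = 0 := perp v x
  have hqv : ⟪q, (v : Euc d)⟫ = 0 := perp v y
  have hxp : x = p + s • (v : Euc d) := by simp [hp]
  have hyq : y = q + s' • (v : Euc d) := by simp [hq]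
  set δ := |s' - s| with hδ
  have hd : ∀ a b : ℝ, ‖(q + a • (v : Euc d)) - (p + b • (v : Euc d))‖ ^ 2 =
      ‖q - p‖ ^ 2 + (a - b) ^ 2 := by
    intro a b
    have : (q + a • (v : Euc d)) - (p + b • (v : Euc d)) = (q - p) + (a - b) • (v : Euc d) := by
      rw [sub_smul]; abel
    rw [this, norm_sq_line, inner_sub_left, hpv, hqv]; ring
  obtain ⟨hcA, hvA⟩ := hA.sec p
  obtain ⟨hcB, hvB⟩ := hB.sec q
  rw [hpv, neg_zero] at hcA
  rw [hqv, neg_zero] at hcB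
  have hsA : s ∈ _root_.sec (v : Euc d) p A' := by
    change p + s • (v : Euc d) ∈ A'
    rwa [← hxp]
  change y ∈ B'
  suffices hsB : s' ∈ _root_.sec (v : Euc d) q B' by
    have : q + s' • (v : Euc d) ∈ B' := hsB
    rwa [← hyq] at this
  rcases hcB with hcB | ⟨b, hcB⟩
  · rw [hcB]; trivial
  have hvol : volume (_root_.sec (v : Euc d) p A) + ENNReal.ofReal (2 * δ) ≤
      volume (_root_.sec (v : Euc d) q B) := by
    obtain ⟨R, hR⟩ := hbd.exists_norm_le
    have hbound : ∀ t ∈ _root_.sec (v : Euc d) p A, |t| ≤ R := by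
      intro t ht
      have h1 := hR _ ht
      have h2 := norm_sq_line v p t
      rw [hpv] at h2
      have hR0 : 0 ≤ R := (norm_nonneg _).trans h1
      refine abs_le_of_sq_le_sq ?_ hR0
      have : ‖p + t • (v : Euc d)‖ ^ 2 ≤ R ^ 2 := by gcongr
      nlinarith [sq_nonneg ‖p‖]
    refine volume_add_interval_le (abs_nonneg _) ?_
      ⟨-R, fun t ht => (abs_le.1 (hbound t ht)).1⟩ ⟨R, fun t ht => (abs_le.1 (hbound t ht)).2⟩ ?_
    · rw [nonempty_iff_ne_empty]
      intro he
      rw [he, measure_empty] at hvA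
      rcases hcA with hcA | ⟨a, hcA⟩
      · rw [hcA] at hvA; simp at hvA
      · rw [hcA, Real.volume_Ioo, ENNReal.ofReal_eq_zero] at hvA
        rw [hcA, mem_Ioo] at hsA
        linarith [hsA.1, hsA.2]
    · intro t ht ρ hρ
      refine h _ ht _ (lt_of_le_of_lt ?_ hy)
      rw [dist_eq_norm, dist_eq_norm]
      refine le_of_sq_le_sq ?_ (norm_nonneg _)
      rw [hd]
      conv_rhs => rw [hyq, hxp, hd]
      have : (t + ρ - t) ^ 2 ≤ (s' - s) ^ 2 := sq_le_sq.2 (by simpa using hρ)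
      linarith
  rw [← hvA, ← hvB, hcB, Real.volume_Ioo] at hvol
  rcases hcA with hcA | ⟨a, hcA⟩
  · rw [hcA] at hvol; simp at hvol
  rw [hcA, Real.volume_Ioo, ← ENNReal.ofReal_add, ENNReal.ofReal_le_ofReal_iff'] at hvol
  · rw [hcA, mem_Ioo] at hsA
    have h1 : s' - s ≤ δ := le_abs_self _
    have h2 : -(s' - s) ≤ δ := neg_le_abs _
    have hδ0 : 0 ≤ δ := abs_nonneg _
    rw [hcB, mem_Ioo]
    rcases hvol with hvol | hvol <;> constructor <;> linarith [hsA.1, hsA.2]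
  · rw [hcA, mem_Ioo] at hsA
    linarith [hsA.1, hsA.2]
  · positivity

/-! ### The Gaussian weight -/

/-- A radially strictly decreasing weight with values in `(0, 1]`. -/
def gw {d : ℕ} (x : Euc d) : ℝ≥0∞ := ENNReal.ofReal (Real.exp (-‖x‖ ^ 2))

lemma measurable_gw {d : ℕ} : Measurable (gw : Euc d → ℝ≥0∞) := by
  unfold gw; fun_prop

lemma gw_le_one {d : ℕ} (x : Euc d) : gw x ≤ 1 := by
  unfold gw
  rw [ENNReal.ofReal_le_one, Real.exp_le_one_iff]
  simp

/-- Bathtub principle: among sets `A` of given finite measure, a superlevel set `S` of `g`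
maximizes `∫ g`, and it is the unique maximizer up to null sets. -/
lemma bathtub {g : ℝ → ℝ≥0∞} (hg : Measurable g) {S A : Set ℝ} (hS : MeasurableSet S)
    (hA : MeasurableSet A) (hSA : volume S = volume A) (hfin : volume A ≠ ⊤) {k : ℝ≥0∞}
    (hk : k ≠ ⊤) (hgS : ∀ t ∈ S, k < g t) (hgS' : ∀ t ∉ S, g t ≤ k) (hg1 : ∀ t, g t ≤ 1) :
    ∫⁻ t in A, g t ≤ ∫⁻ t in S, g t ∧
      (∫⁻ t in A, g t = ∫⁻ t in S, g t → volume (S ∆ A) = 0) := by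
  have hfinS : volume S ≠ ⊤ := hSA ▸ hfin
  have hi : volume (A ∩ S) ≠ ⊤ := measure_ne_top_of_subset inter_subset_left hfin
  have hdiff : volume (A \ S) = volume (S \ A) := by
    have h1 := measure_inter_add_sdiff A hS (μ := (volume : Measure ℝ))
    have h2 := measure_inter_add_sdiff S hA (μ := (volume : Measure ℝ))
    rw [inter_comm S A, hSA, ← h1] at h2
    exact ((ENNReal.add_right_inj hi).1 h2).symm
  have e1 : ∫⁻ t in A, g t = (∫⁻ t in A ∩ S, g t) + ∫⁻ t in A \ S, g t :=
    (lintegral_inter_add_sdiff g A hS).symm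
  have e2 : ∫⁻ t in S, g t = (∫⁻ t in A ∩ S, g t) + ∫⁻ t in S \ A, g t := by
    rw [inter_comm]; exact (lintegral_inter_add_sdiff g S hA).symm
  have hle : ∫⁻ t in A \ S, g t ≤ k * volume (S \ A) := by
    rw [← hdiff, ← setLIntegral_const]
    exact setLIntegral_mono' (hA.diff hS) fun t ht => hgS' t ht.2
  have hge : k * volume (S \ A) ≤ ∫⁻ t in S \ A, g t := by
    rw [← setLIntegral_const]
    exact setLIntegral_mono' (hS.diff hA) fun t ht => (hgS t ht.1).le
  have hif : ∫⁻ t in A ∩ S, g t ≠ ⊤ := by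
    refine ne_top_of_le_ne_top hi ?_
    calc ∫⁻ t in A ∩ S, g t ≤ ∫⁻ t in A ∩ S, 1 := lintegral_mono fun t => hg1 t
      _ = _ := by simp
  refine ⟨by rw [e1, e2]; exact add_le_add le_rfl (hle.trans hge), fun heq => ?_⟩
  have hz : volume (S \ A) = 0 := by
    by_contra hne
    have : ∫⁻ t in S \ A, k < ∫⁻ t in S \ A, g t := by
      refine setLIntegral_strict_mono (hS.diff hA) hne hg ?_ (ae_of_all _ fun t ht => hgS t ht.1)
      rw [setLIntegral_const]
      exact ENNReal.mul_ne_top hk (measure_ne_top_of_subset sdiff_subset hfinS)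
    rw [setLIntegral_const] at this
    rw [e1, e2] at heq
    have := (ENNReal.add_right_inj hif).1 heq
    exact absurd (hle.trans_lt ‹_›) (by rw [this]; exact lt_irrefl _)
  rw [Set.symmDiff_def, measure_union_null_iff]
  exact ⟨hz, hdiff.trans hz⟩

/-- On a line of direction `v` the weight is decreasing in the distance to the point of
parameter `-⟪x, v⟫`, so intervals centred there are superlevel sets, as `bathtub` requires. -/
lemma gw_line {d : ℕ} (v : Metric.sphere (0 : Euc d) 1) (x : Euc d) {S : Set ℝ} {a : ℝ}
    (hS : S = Ioo (-⟪x, (v : Euc d)⟫ - a) (-⟪x, (v : Euc d)⟫ + a)) :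
    ∃ k : ℝ≥0∞, k ≠ ⊤ ∧ (∀ t ∈ S, k < gw (x + t • (v : Euc d))) ∧
      ∀ t ∉ S, gw (x + t • (v : Euc d)) ≤ k := by
  set c := ⟪x, (v : Euc d)⟫ with hc
  have key : ∀ t : ℝ, ‖x + t • (v : Euc d)‖ ^ 2 = (t + c) ^ 2 + (‖x‖ ^ 2 - c ^ 2) := by
    intro t; rw [norm_sq_line]; ring
  by_cases ha : a ≤ 0
  · refine ⟨1, by simp, fun t ht => ?_, fun t _ => gw_le_one _⟩
    rw [hS, mem_Ioo] at ht
    linarith [ht.1, ht.2]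
  push Not at ha
  refine ⟨ENNReal.ofReal (Real.exp (-(a ^ 2 + (‖x‖ ^ 2 - c ^ 2)))), by simp, ?_, ?_⟩
  · intro t ht
    rw [hS, mem_Ioo] at ht
    unfold gw
    rw [ENNReal.ofReal_lt_ofReal_iff (Real.exp_pos _), Real.exp_lt_exp, key]
    have : (t + c) ^ 2 < a ^ 2 := sq_lt_sq' (by linarith) (by linarith)
    linarith
  · intro t ht
    unfold gw
    apply ENNReal.ofReal_le_ofReal
    rw [Real.exp_le_exp, key]
    have : a ^ 2 ≤ (t + c) ^ 2 := by
      rw [← not_lt]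
      intro h
      have := abs_lt_of_sq_lt_sq' h ha.le
      exact ht (by rw [hS, mem_Ioo]; constructor <;> linarith [this.1, this.2])
    linarith

/-- Steiner symmetrization increases the Gaussian weight, strictly so unless it fixes the set
up to a null set. -/
lemma IsSteinerSymmOf.gw_le {d : ℕ} {v : Metric.sphere (0 : Euc d) 1}
    {X Y : Set (Euc d)} (h : IsSteinerSymmOf (v : Euc d) X Y) (hX : MeasurableSet X)
    (hfin : volume X ≠ ⊤) :
    ∫⁻ x in X, gw x ≤ ∫⁻ x in Y, gw x ∧
      (∫⁻ x in X, gw x = ∫⁻ x in Y, gw x → volume (Y ∆ X) = 0) := by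
  have hae : ∀ᵐ x ∂(volume.restrict (slab (v : Euc d))), volume (_root_.sec (v : Euc d) x X) < ⊤ :=
    ae_lt_top (measurable_volume_sec _ hX) (by rw [← volume_lines v hX]; exact hfin)
  have hpt : ∀ᵐ x ∂(volume.restrict (slab (v : Euc d))),
      ∫⁻ t in _root_.sec (v : Euc d) x X, gw (x + t • (v : Euc d)) ≤
        ∫⁻ t in _root_.sec (v : Euc d) x Y, gw (x + t • (v : Euc d)) ∧
      (∫⁻ t in _root_.sec (v : Euc d) x X, gw (x + t • (v : Euc d)) =
        ∫⁻ t in _root_.sec (v : Euc d) x Y, gw (x + t • (v : Euc d)) →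
        volume (_root_.sec (v : Euc d) x Y ∆ _root_.sec (v : Euc d) x X) = 0) := by
    filter_upwards [hae] with x hx
    obtain ⟨hc, hv⟩ := h.sec x
    rcases hc with hc | ⟨a, ha⟩
    · rw [← hv, hc] at hx
      simp at hx
    · obtain ⟨k, hk, h1, h2⟩ := gw_line v x ha
      exact bathtub (g := fun t => gw (x + t • (v : Euc d))) (measurable_gw.comp (by fun_prop))
        (measurableSet_sec _ _ h.1) (measurableSet_sec _ _ hX) hv hx.ne hk h1 h2
        fun t => gw_le_one _
  have hle : ∀ᵐ x ∂(volume.restrict (slab (v : Euc d))), _ := hpt.mono fun x hx => hx.1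
  rw [setLIntegral_lines v measurable_gw hX, setLIntegral_lines v measurable_gw h.1]
  refine ⟨lintegral_mono_ae hle, fun heq => ?_⟩
  have := ae_eq_of_ae_le_of_lintegral_le hle (by
    rw [← setLIntegral_lines v measurable_gw hX]
    refine ne_top_of_le_ne_top hfin ?_
    calc ∫⁻ x in X, gw x ≤ ∫⁻ x in X, 1 := lintegral_mono fun t => gw_le_one t
      _ = _ := by simp) (measurable_set_lines _ measurable_gw h.1).aemeasurable heq.ge
  rw [ae_sec_null v (h.1.symmDiff hX)]
  filter_upwards [this, hpt] with x h1 h2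
  exact h2.2 h1

lemma gw_lipschitz {d : ℕ} (A B : Set (Euc d)) :
    ∫⁻ x in A, gw x ≤ (∫⁻ x in B, gw x) + volume (A ∆ B) := by
  calc ∫⁻ x in A, gw x ≤ ∫⁻ x in B ∪ (A ∆ B), gw x := by
        apply lintegral_mono_set
        intro x hx
        by_cases h : x ∈ B
        · exact Or.inl h
        · exact Or.inr (Or.inl ⟨hx, h⟩)
    _ ≤ (∫⁻ x in B, gw x) + ∫⁻ x in A ∆ B, gw x := lintegral_union_le _ _ _
    _ ≤ (∫⁻ x in B, gw x) + volume (A ∆ B) := by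
        gcongr
        calc ∫⁻ x in A ∆ B, gw x ≤ ∫⁻ x in A ∆ B, 1 := lintegral_mono fun t => gw_le_one t
          _ = _ := by simp

/-! ### Dependence on the direction -/

/-- A rotation taking the unit vector `v` to the unit vector `w`: the product of the
reflections in the lines `ℝ v` and `ℝ (v + w)`. It tends to the identity as `w → v`. -/
def rot {d : ℕ} (v w : Euc d) : Euc d ≃ₗᵢ[ℝ] Euc d :=
  (Submodule.reflection (Submodule.span ℝ {v})).trans
    (Submodule.reflection (Submodule.span ℝ {v + w}))

lemma rot_apply_self {d : ℕ} (v w : Metric.sphere (0 : Euc d) 1)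
    (h : (v : Euc d) + (w : Euc d) ≠ 0) : rot (v : Euc d) w v = w := by
  have h1 : Submodule.reflection (Submodule.span ℝ {(v : Euc d)}) (v : Euc d) = v :=
    Submodule.reflection_mem_subspace_eq_self (Submodule.mem_span_singleton_self _)
  rw [rot, LinearIsometryEquiv.trans_apply, h1, Submodule.reflection_singleton_apply]
  have hn : ‖(v : Euc d) + w‖ ^ 2 = 2 * ⟪(v : Euc d) + w, (v : Euc d)⟫ := by
    rw [norm_add_sq_real, inner_add_left, unit_inner, real_inner_comm]; simp; ring
  have hn0 : ‖(v : Euc d) + w‖ ^ 2 ≠ 0 := by simpa using h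
  have : ⟪(v : Euc d) + w, (v : Euc d)⟫ / ‖(v : Euc d) + w‖ ^ 2 = 1 / 2 := by
    rw [div_eq_iff hn0, hn]; ring
  simp only [RCLike.ofReal_real_eq_id, id]
  rw [this, ← Nat.cast_smul_eq_nsmul ℝ, smul_smul]
  norm_num

/-- `rot v w` conjugates symmetrization along `v` to symmetrization along `w`. -/
lemma steiner_rot {d : ℕ} {v w : Metric.sphere (0 : Euc d) 1} {X Y : Set (Euc d)}
    (U : Euc d ≃ₗᵢ[ℝ] Euc d) (hU : U v = w) (h : IsSteinerSymmOf (v : Euc d) (U ⁻¹' X) Y) :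
    IsSteinerSymmOf (w : Euc d) X (U.symm ⁻¹' Y) := by
  refine ⟨U.symm.continuous.measurable h.1, fun x hx => ?_⟩
  have hx' : ⟪U.symm x, (v : Euc d)⟫ = 0 := by
    rw [← U.inner_map_map, hU]; simpa using hx
  have hw : U.symm w = v := by rw [← hU]; simp
  have h2 := h.2 (U.symm x) hx'
  have e1 : ∀ t : ℝ, U (U.symm x + t • (v : Euc d)) = x + t • (w : Euc d) := by
    intro t; simp [hU]
  have e2 : ∀ t : ℝ, U.symm (x + t • (w : Euc d)) = U.symm x + t • (v : Euc d) := by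
    intro t; simp [hw]
  simp only [mem_preimage, e1] at h2
  simp only [mem_preimage, e2]
  exact h2

lemma volume_symmDiff_le4 {d : ℕ} (A B C D : Set (Euc d)) :
    volume (A ∆ D) ≤ volume (A ∆ B) + volume (B ∆ C) + volume (C ∆ D) :=
  (measure_symmDiff_le A C D).trans (by gcongr; exact measure_symmDiff_le A B C)

lemma volume_symmDiff_preimage {d : ℕ} (U : Euc d ≃ₗᵢ[ℝ] Euc d) {A B : Set (Euc d)}
    (hA : MeasurableSet A) (hB : MeasurableSet B) :
    volume ((U ⁻¹' A) ∆ (U ⁻¹' B)) = volume (A ∆ B) :=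
  U.measurePreserving.measure_preimage (hA.symmDiff hB).nullMeasurableSet

lemma tendsto_rot {d : ℕ} {ι : Type*} {l : Filter ι} {v : Metric.sphere (0 : Euc d) 1}
    {w : ι → Metric.sphere (0 : Euc d) 1} (hw : Tendsto w l (𝓝 v)) {X : Set (Euc d)}
    (hX : MeasurableSet X) (hfin : volume X ≠ ⊤) :
    Tendsto (fun i => volume ((rot (v : Euc d) (w i) ⁻¹' X) ∆ X)) l (𝓝 0) := by
  let S : Set (Metric.sphere (0 : Euc d) 1) := {w | (v : Euc d) + (w : Euc d) ≠ 0}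
  have hSo : IsOpen S := isOpen_ne_fun (by fun_prop) (by fun_prop)
  have hvS : v ∈ S := by
    change (v : Euc d) + v ≠ 0
    rw [← two_smul ℝ]
    simp only [ne_eq, smul_eq_zero, OfNat.ofNat_ne_zero, false_or]
    exact ne_zero_of_mem_unit_sphere v
  have hcont : Continuous fun p : S × Euc d => rot (v : Euc d) (p.1.1 : Euc d) p.2 := by
    simp only [rot, LinearIsometryEquiv.trans_apply]
    simp only [Submodule.reflection_singleton_apply (_ + _)]
    have h0 : ∀ p : S × Euc d,
        ((‖(v : Euc d) + (p.1.1 : Euc d)‖ : ℝ)) ^ 2 ≠ 0 := fun p => by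
      have h : (v : Euc d) + (p.1.1 : Euc d) ≠ 0 := p.1.2
      exact pow_ne_zero 2 (norm_ne_zero_iff.2 h)
    refine Continuous.sub (Continuous.const_smul (Continuous.smul (Continuous.div ?_ ?_ h0) ?_) 2) ?_
    all_goals fun_prop
  let g : S → C(Euc d, Euc d) := ContinuousMap.curry ⟨_, hcont⟩
  have hg : Continuous g := ContinuousMap.continuous _
  have hmp : ∀ w : S, MeasurePreserving (g w) := fun w =>
    (rot (v : Euc d) (w.1 : Euc d)).measurePreserving
  have hid : ∀ x, g ⟨v, hvS⟩ x = x := by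
    intro x
    change rot (v : Euc d) v x = x
    have hspan : Submodule.span ℝ {(v : Euc d) + v} = Submodule.span ℝ {(v : Euc d)} := by
      rw [← two_smul ℝ, Submodule.span_singleton_smul_eq (IsUnit.mk0 (2 : ℝ) two_ne_zero)]
    rw [rot, LinearIsometryEquiv.trans_apply]
    simp only [hspan]
    exact Submodule.reflection_reflection _ x
  have hlim := tendsto_measure_symmDiff_preimage_nhds_zero (hg.tendsto ⟨v, hvS⟩)
    (Eventually.of_forall hmp) (hmp _) hX.nullMeasurableSet hfin
  have hpre : g ⟨v, hvS⟩ ⁻¹' X = X := by ext x; rw [mem_preimage, hid]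
  rw [hpre] at hlim
  have : Tendsto (fun w : Metric.sphere (0 : Euc d) 1 =>
      volume ((rot (v : Euc d) w ⁻¹' X) ∆ X)) (𝓝 v) (𝓝 0) := by
    rw [← map_nhds_subtype_coe_eq_nhds hvS (hSo.mem_nhds hvS), tendsto_map'_iff]
    exact hlim
  exact this.comp hw

/-- Steiner symmetrization is jointly continuous in the direction and, for `d₁`, the set:
`steiner_rot` trades a change of direction for small rotations of `X` and of its symmetrization. -/
lemma tendsto_steiner {d : ℕ}
    {op : Metric.sphere (0 : Euc d) 1 → Set (Euc d) → Set (Euc d)} (hop : IsSteinerOp op)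
    {ι : Type*} {l : Filter ι} {v : Metric.sphere (0 : Euc d) 1}
    {w : ι → Metric.sphere (0 : Euc d) 1} (hw : Tendsto w l (𝓝 v)) {A : ι → Set (Euc d)}
    {X : Set (Euc d)} (hA : ∀ i, MeasurableSet (A i)) (hX : MeasurableSet X)
    (hfin : volume X ≠ ⊤) (hAX : Tendsto (fun i => volume (A i ∆ X)) l (𝓝 0)) :
    Tendsto (fun i => volume (op (w i) (A i) ∆ op v X)) l (𝓝 0) := by
  have hY := hop v X hX
  have hYfin : volume (op v X) ≠ ⊤ := by rwa [hY.volume_eq hX]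
  have h1 := tendsto_rot hw hX hfin
  have h2 := tendsto_rot hw hY.1 hYfin
  have h3 := (hAX.add h1).add h2
  simp only [add_zero] at h3
  have hne : ∀ᶠ i in l, (v : Euc d) + (w i : Euc d) ≠ 0 := by
    have : Tendsto (fun i => (v : Euc d) + (w i : Euc d)) l (𝓝 ((v : Euc d) + v)) :=
      tendsto_const_nhds.add ((continuous_subtype_val.tendsto v).comp hw)
    refine this.eventually_ne ?_
    rw [← two_smul ℝ]
    simp only [ne_eq, smul_eq_zero, OfNat.ofNat_ne_zero, false_or]
    exact ne_zero_of_mem_unit_sphere v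
  refine tendsto_of_tendsto_of_tendsto_of_le_of_le' tendsto_const_nhds h3
    (Eventually.of_forall fun _ => zero_le) ?_
  filter_upwards [hne] with i hi
  set U := rot (v : Euc d) (w i)
  have hUX : MeasurableSet (U ⁻¹' X) := U.continuous.measurable hX
  have hZ := hop v _ hUX
  have hrot := steiner_rot U (rot_apply_self v (w i) hi) hZ
  have e : op (w i) X = U.symm ⁻¹' (op v (U ⁻¹' X)) := (hop (w i) X hX).unique hrot
  refine (volume_symmDiff_le4 _ (op (w i) X) (U.symm ⁻¹' (op v X)) _).trans ?_
  gcongr ?_ + ?_ + ?_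
  · exact (hop _ _ (hA i)).contract (hop _ _ hX) (hA i) hX
  · rw [e, volume_symmDiff_preimage _ hZ.1 hY.1]
    exact hZ.contract hY hUX hX
  · rw [← volume_symmDiff_preimage U (U.symm.continuous.measurable hY.1) hY.1, symmDiff_comm]
    refine le_of_eq ?_
    congr 2
    ext y; simp

/-! ### Compactness and completeness -/

/-- A sequence of measurable sets which is summably Cauchy for `d₁` converges to its
limit superior. -/
lemma exists_limit {d : ℕ} {A : ℕ → Set (Euc d)} (hA : ∀ n, MeasurableSet (A n))
    (hc : ∀ n, volume (A n ∆ A (n + 1)) ≤ (1 / 2) ^ n) :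
    ∃ Y, MeasurableSet Y ∧ Tendsto (fun n => volume (A n ∆ Y)) atTop (𝓝 0) := by
  refine ⟨limsup A atTop, MeasurableSet.measurableSet_limsup hA, ?_⟩
  have hb : ∀ n, volume (A n ∆ limsup A atTop) ≤ ∑' k, ((1 / 2 : ℝ≥0∞)) ^ (k + n) := by
    intro n
    have hsub : A n ∆ limsup A atTop ⊆ ⋃ k, A (k + n) ∆ A (k + n + 1) := by
      intro x hx
      by_contra hcon
      simp only [mem_iUnion, not_exists] at hcon
      have hconst : ∀ k, x ∈ A (k + n) ↔ x ∈ A n := by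
        intro k
        induction k with
        | zero => simp
        | succ k ih =>
          have := hcon k
          rw [mem_symmDiff] at this
          rw [← ih, show k + 1 + n = k + n + 1 by ring]
          tauto
      have : x ∈ limsup A atTop ↔ x ∈ A n := by
        rw [mem_limsup_iff_frequently_mem, frequently_atTop]
        constructor
        · intro h
          obtain ⟨b, hb, hxb⟩ := h n
          rw [← hconst (b - n), Nat.sub_add_cancel hb]; exact hxb
        · intro h a
          exact ⟨a + n, Nat.le_add_right _ _, (hconst a).2 h⟩
      rw [mem_symmDiff] at hx
      tauto
    refine (measure_mono hsub).trans ((measure_iUnion_le _).trans ?_)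
    exact ENNReal.tsum_le_tsum fun k => hc (k + n)
  refine tendsto_of_tendsto_of_tendsto_of_le_of_le tendsto_const_nhds
    (ENNReal.tendsto_sum_nat_add _ ?_) (fun _ => zero_le) hb
  rw [ENNReal.tsum_geometric]
  simp

instance {d : ℕ} : CompleteSpace (MeasuredSets (volume : Measure (Euc d))) := by
  refine EMetric.complete_of_convergent_controlled_sequences (fun n => (1 / 2) ^ n)
    (fun n => ENNReal.pow_pos (by simp) n) fun u hu => ?_
  obtain ⟨Y, hY, h⟩ := exists_limit (A := fun n => (u n : Set (Euc d))) (fun n => (u n).2)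
    (fun n => (hu n n (n + 1) le_rfl n.le_succ).le)
  exact ⟨⟨Y, hY⟩, tendsto_iff_edist_tendsto_0.2 h⟩

/-- A sequence of uniformly bounded sets whose thickenings are uniformly close to them in
measure is precompact: up to the measure of the thickening, each set is the union of those
members of a fixed finite cover by small balls which meet it. -/
lemma exists_convergent_subseq {d : ℕ} {A : ℕ → Set (Euc d)} (hA : ∀ n, MeasurableSet (A n))
    {R : ℝ} (hR : ∀ n, A n ⊆ Metric.ball 0 R)
    (h : ∀ ε : ℝ≥0∞, 0 < ε → ∃ r > 0, ∀ n, volume (Metric.thickening r (A n) \ A n) ≤ ε) :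
    ∃ Y, MeasurableSet Y ∧ ∃ σ : ℕ → ℕ, StrictMono σ ∧
      Tendsto (fun n => volume (A (σ n) ∆ Y)) atTop (𝓝 0) := by
  let u : ℕ → MeasuredSets (volume : Measure (Euc d)) := fun n => ⟨A n, hA n⟩
  have htb : TotallyBounded (range u) := by
    rw [EMetric.totallyBounded_iff]
    intro ε hε
    obtain ⟨δ, hδ, hδε⟩ := exists_between hε
    obtain ⟨r, hr, hrδ⟩ := h δ hδ
    have hb : TotallyBounded (Metric.ball (0 : Euc d) R) :=
      (isCompact_closedBall (0 : Euc d) R).totallyBounded.subset Metric.ball_subset_closedBall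
    obtain ⟨t, htf, ht⟩ := Metric.totallyBounded_iff.1 hb (r / 2) (by positivity)
    let V : Set (Euc d) → MeasuredSets (volume : Measure (Euc d)) := fun I =>
      ⟨⋃ c ∈ I, Metric.ball c (r / 2), (isOpen_biUnion fun _ _ => Metric.isOpen_ball).measurableSet⟩
    refine ⟨V '' 𝒫 t, htf.finite_subsets.image V, ?_⟩
    rintro _ ⟨n, rfl⟩
    let I : Set (Euc d) := {c ∈ t | (Metric.ball c (r / 2) ∩ A n).Nonempty}
    refine mem_biUnion (x := V I) ⟨I, fun c hc => hc.1, rfl⟩ ?_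
    rw [Metric.mem_eball]
    refine lt_of_le_of_lt ?_ hδε
    refine le_trans (measure_mono ?_) (hrδ n)
    rintro x (⟨hx, hx'⟩ | ⟨hx, hx'⟩)
    · exfalso
      apply hx'
      obtain ⟨c, hc, hxc⟩ := mem_iUnion₂.1 (ht (hR n hx))
      exact mem_iUnion₂.2 ⟨c, ⟨hc, x, hxc, hx⟩, hxc⟩
    · refine ⟨?_, hx'⟩
      obtain ⟨c, ⟨_, y, hyc, hy⟩, hxc⟩ := mem_iUnion₂.1 hx
      rw [Metric.mem_thickening_iff]
      refine ⟨y, hy, ?_⟩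
      have := dist_triangle_right x y c
      rw [Metric.mem_ball] at hyc hxc
      linarith
  have hcpt : IsCompact (closure (range u)) :=
    htb.closure.isCompact_of_isClosed isClosed_closure
  obtain ⟨Y, -, σ, hσ, hlim⟩ := hcpt.tendsto_subseq (x := u) fun n => subset_closure ⟨n, rfl⟩
  exact ⟨Y, Y.2, σ, hσ, tendsto_iff_edist_tendsto_0.1 hlim⟩

lemma volume_lim {d : ℕ} {A : ℕ → Set (Euc d)} (hA : ∀ n, MeasurableSet (A n))
    {Y : Set (Euc d)} (hY : MeasurableSet Y)
    (h : Tendsto (fun n => volume (A n ∆ Y)) atTop (𝓝 0)) :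
    Tendsto (fun n => volume (A n)) atTop (𝓝 (volume Y)) := by
  let u : ℕ → MeasuredSets (volume : Measure (Euc d)) := fun n => ⟨A n, hA n⟩
  have hu : Tendsto u atTop (𝓝 ⟨Y, hY⟩) := tendsto_iff_edist_tendsto_0.2 h
  exact (MeasuredSets.continuous_measure.tendsto _).comp hu

/-- The Gaussian weight is continuous for `d₁`. -/
lemma gw_lim {d : ℕ} {A : ℕ → Set (Euc d)} (hA : ∀ n, MeasurableSet (A n))
    {Y : Set (Euc d)} (hY : MeasurableSet Y)
    (h : Tendsto (fun n => volume (A n ∆ Y)) atTop (𝓝 0)) :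
    Tendsto (fun n => ∫⁻ x in A n, gw x) atTop (𝓝 (∫⁻ x in Y, gw x)) := by
  let u : ℕ → MeasuredSets (volume : Measure (Euc d)) := fun n => ⟨A n, hA n⟩
  have hu : Tendsto u atTop (𝓝 ⟨Y, hY⟩) := tendsto_iff_edist_tendsto_0.2 h
  have hc : Continuous fun s : MeasuredSets (volume : Measure (Euc d)) =>
      ∫⁻ x in (s : Set (Euc d)), gw x := by
    refine continuous_of_le_add_edist 1 ENNReal.one_ne_top fun s t => ?_
    rw [one_mul]
    exact gw_lipschitz _ _
  exact (hc.tendsto _).comp hu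

/-! ### Sets fixed by all symmetrizations -/

/-- If every translate of `Q` meets `P` in a null set, then `P` or `Q` is null: integrate
`m(P ∩ (Q + z))` over `z`. -/
lemma exists_translate {d : ℕ} {P Q : Set (Euc d)} (hP : MeasurableSet P) (hQ : MeasurableSet Q)
    (hP0 : volume P ≠ 0) (hQ0 : volume Q ≠ 0) :
    ∃ z : Euc d, volume (P ∩ (fun x => x - z) ⁻¹' Q) ≠ 0 := by
  by_contra! hcon
  have hQz : ∀ z : Euc d, MeasurableSet ((fun x => x - z) ⁻¹' Q) := fun z =>
    (measurable_id.sub_const z) hQ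
  have e1 : ∀ z : Euc d, ∫⁻ x, P.indicator 1 x * Q.indicator (1 : Euc d → ℝ≥0∞) (x - z) = 0 := by
    intro z
    rw [← hcon z, ← lintegral_indicator_one (hP.inter (hQz z))]
    congr 1 with x
    by_cases hx : x ∈ P <;> by_cases hx' : x - z ∈ Q <;> simp [hx, hx', indicator]
  have hmP : Measurable (P.indicator (1 : Euc d → ℝ≥0∞)) := measurable_one.indicator hP
  have hmQ : Measurable (Q.indicator (1 : Euc d → ℝ≥0∞)) := measurable_one.indicator hQ
  have e2 : ∫⁻ z : Euc d, ∫⁻ x, P.indicator 1 x * Q.indicator (1 : Euc d → ℝ≥0∞) (x - z) =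
      volume P * volume Q := by
    rw [lintegral_lintegral_swap]
    · have : ∀ x : Euc d, ∫⁻ z : Euc d, P.indicator 1 x * Q.indicator (1 : Euc d → ℝ≥0∞) (x - z)
          = P.indicator 1 x * volume Q := by
        intro x
        have hmQx : Measurable fun z : Euc d => Q.indicator (1 : Euc d → ℝ≥0∞) (x - z) :=
          hmQ.comp (by fun_prop)
        rw [lintegral_const_mul _ hmQx,
          lintegral_sub_left_eq_self (fun z => Q.indicator (1 : Euc d → ℝ≥0∞) z) x,
          lintegral_indicator_one hQ]
      simp_rw [this]
      rw [lintegral_mul_const _ hmP, lintegral_indicator_one hP]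
    · apply Measurable.aemeasurable
      exact (hmP.comp (by fun_prop)).mul (hmQ.comp (by fun_prop))
  simp only [e1, lintegral_zero] at e2
  rcases mul_eq_zero.1 e2.symm with h | h
  · exact hP0 h
  · exact hQ0 h

/-- A set fixed, up to null sets, by Steiner symmetrization in every direction is a ball: if it
were not, some line would meet both its excess over the ball and its deficit in positive
length, but on that line the set and the ball are intervals with the same centre. -/
lemma eq_ball_of_fixed {d : ℕ} {Y : Set (Euc d)} (hY : MeasurableSet Y) (hfin : volume Y ≠ ⊤)
    {R : ℝ} (hR : volume (Metric.ball (0 : Euc d) R) = volume Y)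
    (hfix : ∀ v : Metric.sphere (0 : Euc d) 1, ∃ Y', IsSteinerSymmOf (v : Euc d) Y Y' ∧
      volume (Y' ∆ Y) = 0) :
    volume (Y ∆ Metric.ball 0 R) = 0 := by
  set B := Metric.ball (0 : Euc d) R
  have hB : MeasurableSet B := measurableSet_ball
  have hi : volume (Y ∩ B) ≠ ⊤ := measure_ne_top_of_subset inter_subset_left hfin
  have hdiff : volume (Y \ B) = volume (B \ Y) := by
    have h1 := measure_inter_add_sdiff Y hB (μ := (volume : Measure (Euc d)))
    have h2 := measure_inter_add_sdiff B hY (μ := (volume : Measure (Euc d)))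
    rw [inter_comm B Y, hR, ← h1] at h2
    exact ((ENNReal.add_right_inj hi).1 h2).symm
  by_contra hne
  have hP0 : volume (Y \ B) ≠ 0 := by
    intro h0
    apply hne
    rw [Set.symmDiff_def, measure_union_null_iff]
    exact ⟨h0, hdiff ▸ h0⟩
  have hQ0 : volume (B \ Y) ≠ 0 := hdiff ▸ hP0
  obtain ⟨z, hz⟩ := exists_translate (hY.diff hB) (hB.diff hY) hP0 hQ0
  have hz0 : z ≠ 0 := by
    rintro rfl
    apply hz
    have : (Y \ B) ∩ (fun x => x - 0) ⁻¹' (B \ Y) = ∅ := by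
      ext x; simp; tauto
    rw [this, measure_empty]
  let v : Metric.sphere (0 : Euc d) 1 := ⟨‖z‖⁻¹ • z, by simp [norm_smul, hz0]⟩
  have hzv : z = ‖z‖ • (v : Euc d) := by simp [v, smul_smul, hz0]
  obtain ⟨Y', hY', hnull⟩ := hfix v
  have hE : MeasurableSet ((Y \ B) ∩ (fun x => x - z) ⁻¹' (B \ Y)) :=
    (hY.diff hB).inter ((measurable_id.sub_const z) (hB.diff hY))
  rw [Ne, ae_sec_null v hE] at hz
  rw [ae_sec_null v (hY'.1.symmDiff hY)] at hnull
  obtain ⟨x, hx, hx'⟩ := ((not_eventually.1 hz).and_eventually hnull).exists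
  have hP : volume (sec (v : Euc d) x (Y \ B)) ≠ 0 := fun h =>
    hx (measure_mono_null (sec_mono _ _ inter_subset_left) h)
  have hQ : volume (sec (v : Euc d) x (B \ Y)) ≠ 0 := by
    intro h
    apply hx
    refine measure_mono_null (sec_mono _ _ inter_subset_right) ?_
    have : sec (v : Euc d) x ((fun x => x - z) ⁻¹' (B \ Y)) =
        (fun t => t - ‖z‖) ⁻¹' (sec (v : Euc d) x (B \ Y)) := by
      ext t
      have : x + t • (v : Euc d) - z = x + (t - ‖z‖) • (v : Euc d) := by
        conv_lhs => rw [hzv]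
        rw [sub_smul]; abel
      change x + t • (v : Euc d) - z ∈ B \ Y ↔ x + (t - ‖z‖) • (v : Euc d) ∈ B \ Y
      rw [this]
    rw [this]
    simpa [sub_eq_add_neg] using h
  rcases (hY'.sec x).1.subset_total ((steiner_ball v R).sec x).1 with hsub | hsub
  · apply hP
    refine measure_mono_null ?_ hx'
    rintro t ⟨ht, ht'⟩
    exact Or.inr ⟨ht, fun h => ht' (hsub h)⟩
  · apply hQ
    refine measure_mono_null ?_ hx'
    rintro t ⟨ht, ht'⟩
    exact Or.inl ⟨hsub ht, ht'⟩

/-! ### Recurrence of the dense orbit -/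

/-- A point with dense forward orbit in a compact space is recurrent. -/
lemma exists_recurrence {S : Type*} [TopologicalSpace S] [CompactSpace S] [T2Space S]
    [FirstCountableTopology S] {φ : S → S} (hφ : Continuous φ) {s : S}
    (hdense : Dense (Set.range fun n : ℕ => φ^[n + 1] s)) :
    ∃ n : ℕ → ℕ, StrictMono n ∧ Tendsto (fun k => φ^[n k + 1] s) atTop (𝓝 s) := by
  have hcl : IsClosedMap φ := hφ.isClosedMap
  have hsurj : Function.Surjective φ := by
    rw [← range_eq_univ, ← hcl.isClosed_range.closure_eq]
    refine (hdense.mono ?_).closure_eq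
    rintro _ ⟨n, rfl⟩
    exact ⟨φ^[n] s, by simp only [Function.iterate_succ_apply']⟩
  -- The image of a dense set under the continuous surjection `φ` is dense, so every tail of
  -- the orbit is dense, even when `S` has isolated points.
  have htail : ∀ N : ℕ, Dense (Set.range fun n : ℕ => φ^[n + N + 1] s) := by
    intro N
    induction N with
    | zero => simpa using hdense
    | succ N ih =>
      have := hsurj.denseRange.dense_image hφ ih
      rw [← range_comp] at this
      convert this using 2
      ext n
      simp only [Function.comp]
      rw [← Function.iterate_succ_apply' φ]
      rfl
  have hcp : MapClusterPt s atTop fun n : ℕ => φ^[n + 1] s := by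
    rw [mapClusterPt_iff_frequently]
    intro U hU
    rw [frequently_atTop]
    intro N
    obtain ⟨_, hyU, ⟨n, rfl⟩⟩ := mem_closure_iff_nhds.1 (htail N s) U hU
    exact ⟨n + N, Nat.le_add_left _ _, hyU⟩
  exact hcp.tendsto_subseq

/-! ### Convergence -/

/-- A relation preserved by each symmetrization is preserved by the iterates. -/
lemma detIter_rel {α S : Type*} {op : S → α → α} {X X' : α} {u : ℕ → S} {Q : α → α → Prop}
    (h : Q X X') (hstep : ∀ v A B, Q A B → Q (op v A) (op v B)) :
    ∀ n, Q (detIter op X u n) (detIter op X' u n)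
  | 0 => hstep _ _ _ h
  | n + 1 => hstep _ _ _ (detIter_rel h hstep n)

section Iterates

variable {d : ℕ} {op : Metric.sphere (0 : Euc d) 1 → Set (Euc d) → Set (Euc d)}

lemma detIter_meas (hop : IsSteinerOp op) {X : Set (Euc d)} (hX : MeasurableSet X)
    (u : ℕ → Metric.sphere (0 : Euc d) 1) (n : ℕ) :
    MeasurableSet (detIter op X u n) ∧ volume (detIter op X u n) = volume X :=
  detIter_rel (Q := fun A _ => MeasurableSet A ∧ volume A = volume X) (X' := X) ⟨hX, rfl⟩
    (fun v A _ h => ⟨(hop v A h.1).1, ((hop v A h.1).volume_eq h.1).trans h.2⟩) n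

lemma detIter_contract (hop : IsSteinerOp op) {X X' : Set (Euc d)} (hX : MeasurableSet X)
    (hX' : MeasurableSet X') (u : ℕ → Metric.sphere (0 : Euc d) 1) (n : ℕ) :
    volume (detIter op X u n ∆ detIter op X' u n) ≤ volume (X ∆ X') :=
  (detIter_rel (Q := fun A B => MeasurableSet A ∧ MeasurableSet B ∧
      volume (A ∆ B) ≤ volume (X ∆ X')) ⟨hX, hX', le_rfl⟩
    (fun v A B h => ⟨(hop v A h.1).1, (hop v B h.2.1).1,
      ((hop v A h.1).contract (hop v B h.2.1) h.1 h.2.1).trans h.2.2⟩) n).2.2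

lemma op_ball (hop : IsSteinerOp op) (v : Metric.sphere (0 : Euc d) 1) (R : ℝ) :
    op v (Metric.ball 0 R) = Metric.ball 0 R :=
  (hop v _ measurableSet_ball).unique (steiner_ball v R)

lemma detIter_subset_ball (hop : IsSteinerOp op) {X : Set (Euc d)} (hX : MeasurableSet X)
    {R : ℝ} (hR : X ⊆ Metric.ball 0 R) (u : ℕ → Metric.sphere (0 : Euc d) 1) (n : ℕ) :
    detIter op X u n ⊆ Metric.ball 0 R :=
  (detIter_rel (Q := fun A _ => MeasurableSet A ∧ A ⊆ Metric.ball 0 R) (X' := X) ⟨hX, hR⟩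
    (fun v A _ h => ⟨(hop v A h.1).1, (hop v A h.1).mono (steiner_ball v R) h.2⟩) n).2

lemma detIter_thickening (hop : IsSteinerOp op) {X : Set (Euc d)} (hX : MeasurableSet X)
    {R : ℝ} (hR : X ⊆ Metric.ball 0 R) (r : ℝ) (u : ℕ → Metric.sphere (0 : Euc d) 1) (n : ℕ) :
    Metric.thickening r (detIter op X u n) ⊆ detIter op (Metric.thickening r X) u n := by
  have h := (detIter_rel (op := op) (u := u) (X := X) (X' := Metric.thickening r X)
    (Q := fun A B => MeasurableSet A ∧ MeasurableSet B ∧ A ⊆ Metric.ball 0 R ∧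
      ∀ x ∈ A, ∀ y, dist y x < r → y ∈ B)
    ⟨hX, Metric.isOpen_thickening.measurableSet, hR, fun x hx y hy =>
      Metric.mem_thickening_iff.2 ⟨x, hx, hy⟩⟩
    (fun v A B h => ⟨(hop v A h.1).1, (hop v B h.2.1).1,
      (hop v A h.1).mono (steiner_ball v R) h.2.2.1,
      steiner_thickening (hop v A h.1) (hop v B h.2.1)
        (Metric.isBounded_ball.subset h.2.2.1) h.2.2.2⟩) n).2.2.2
  intro y hy
  obtain ⟨x, hx, hxy⟩ := Metric.mem_thickening_iff.1 hy
  exact h x hx y hxy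

/-- The iterates of a compact set satisfy the hypothesis of the compactness criterion. -/
lemma detIter_thickening_le (hop : IsSteinerOp op) {K : Set (Euc d)} (hK : IsCompact K)
    {R : ℝ} (hR : K ⊆ Metric.ball 0 R) (u : ℕ → Metric.sphere (0 : Euc d) 1) {ε : ℝ≥0∞}
    (hε : 0 < ε) :
    ∃ r > 0, ∀ n, volume (Metric.thickening r (detIter op K u n) \ detIter op K u n) ≤ ε := by
  have hKfin : volume K ≠ ⊤ := hK.measure_lt_top.ne
  have hlim := tendsto_measure_thickening_of_isClosed (μ := (volume : Measure (Euc d)))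
    ⟨1, one_pos, (hK.isBounded.thickening.measure_lt_top).ne⟩ hK.isClosed
  have hev := hlim.eventually_lt_const (ENNReal.lt_add_right hKfin hε.ne')
  obtain ⟨r, hr, hr0⟩ := (hev.and self_mem_nhdsWithin).exists
  refine ⟨r, hr0, fun n => ?_⟩
  have hm := detIter_meas hop hK.measurableSet u n
  have hm' := detIter_meas hop (Metric.isOpen_thickening (δ := r) (E := K)).measurableSet u n
  have hsub := detIter_thickening hop hK.measurableSet hR r u n
  refine (measure_mono (sdiff_subset_sdiff_left hsub)).trans ?_
  rw [measure_sdiff ((Metric.self_subset_thickening hr0 _).trans hsub) hm.1.nullMeasurableSet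
    (by rwa [hm.2]), hm.2, hm'.2, tsub_le_iff_left]
  exact hr.le

/-- Convergence for compact sets. A subsequential limit `Y` along times at which the direction
returns to `s` has the supremal Gaussian weight, and so have its own symmetrizations along
`φ(s), φ²(s), …`; hence all these, and by density all directions, fix `Y`. -/
lemma detIter_compact (hop : IsSteinerOp op) {φ : Metric.sphere (0 : Euc d) 1 →
    Metric.sphere (0 : Euc d) 1} (hφ : Continuous φ) {s : Metric.sphere (0 : Euc d) 1}
    (hdense : Dense (Set.range fun n : ℕ => φ^[n + 1] s)) {K : Set (Euc d)} (hK : IsCompact K)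
    {ρ : ℝ} (hρ : volume (Metric.ball (0 : Euc d) ρ) = volume K) :
    Tendsto (fun n => volume (detIter op K (fun k => φ^[k + 1] s) n ∆ Metric.ball 0 ρ))
      atTop (𝓝 0) := by
  set Z : ℕ → Set (Euc d) := detIter op K (fun k => φ^[k + 1] s) with hZdef
  have hKfin : volume K ≠ ⊤ := hK.measure_lt_top.ne
  have hZ : ∀ n, MeasurableSet (Z n) := fun n => (detIter_meas hop hK.measurableSet _ n).1
  have hZv : ∀ n, volume (Z n) = volume K := fun n => (detIter_meas hop hK.measurableSet _ n).2
  have hZs : ∀ n, Z (n + 1) = op (φ^[n + 2] s) (Z n) := fun n => rfl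
  obtain ⟨R, hR⟩ : ∃ R, K ⊆ Metric.ball (0 : Euc d) R := hK.isBounded.subset_ball 0
  obtain ⟨n, hn, hns⟩ := exists_recurrence hφ hdense
  obtain ⟨Y, hY, σ, hσ, hlim⟩ := exists_convergent_subseq (A := fun k => Z (n k))
    (fun k => hZ _) (fun k => detIter_subset_ball hop hK.measurableSet hR _ _) fun ε hε => by
      obtain ⟨r, hr, h⟩ := detIter_thickening_le hop hK hR (fun k => φ^[k + 1] s) hε
      exact ⟨r, hr, fun k => h (n k)⟩
  set τ : ℕ → ℕ := fun k => n (σ k) with hτ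
  have hτmono : StrictMono τ := hn.comp hσ
  have hτs : Tendsto (fun k => φ^[τ k + 1] s) atTop (𝓝 s) := hns.comp hσ.tendsto_atTop
  have hYv : volume Y = volume K :=
    tendsto_nhds_unique (volume_lim (fun k => hZ _) hY hlim) (by simp [hZv])
  have hYfin : volume Y ≠ ⊤ := by rwa [hYv]
  -- `W j` is the limit of `Z (τ k + j)` as `k → ∞`.
  let W : ℕ → Set (Euc d) := fun j => Nat.rec Y (fun i A => op (φ^[i + 1] s) A) j
  have hW0 : W 0 = Y := rfl
  have hWs : ∀ j, W (j + 1) = op (φ^[j + 1] s) (W j) := fun j => rfl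
  have hW : ∀ j, MeasurableSet (W j) ∧ volume (W j) = volume Y ∧
      Tendsto (fun k => volume (Z (τ k + j) ∆ W j)) atTop (𝓝 0) := by
    intro j
    induction j with
    | zero => exact ⟨hY, rfl, hlim⟩
    | succ j ih =>
      obtain ⟨h1, h2, h3⟩ := ih
      have hS := hop (φ^[j + 1] s) (W j) h1
      refine ⟨hS.1, (hS.volume_eq h1).trans h2, ?_⟩
      have hdir : Tendsto (fun k => φ^[τ k + j + 2] s) atTop (𝓝 (φ^[j + 1] s)) := by
        have := ((hφ.iterate (j + 1)).tendsto s).comp hτs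
        refine this.congr fun k => ?_
        simp only [Function.comp]
        rw [← Function.iterate_add_apply]
        rw [show j + 1 + (τ k + 1) = τ k + j + 2 by ring]
      exact tendsto_steiner hop hdir (fun k => hZ _) h1 (by rwa [h2]) h3
  have hmono : Monotone fun m => ∫⁻ x in Z m, gw x := by
    refine monotone_nat_of_le_succ fun m => ?_
    rw [hZs]
    exact ((hop _ _ (hZ m)).gw_le (hZ m) (by rwa [hZv])).1
  have hL := tendsto_atTop_iSup hmono
  have hWL : ∀ j, ∫⁻ x in W j, gw x = ⨆ m, ∫⁻ x in Z m, gw x := by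
    intro j
    refine tendsto_nhds_unique (gw_lim (fun k => hZ _) (hW j).1 (hW j).2.2) (hL.comp ?_)
    exact (tendsto_add_atTop_iff_nat j).2 tendsto_id |>.comp hτmono.tendsto_atTop
  have hstep : ∀ j, volume (op (φ^[j + 1] s) (W j) ∆ W j) = 0 := by
    intro j
    refine ((hop _ _ (hW j).1).gw_le (hW j).1 (by rw [(hW j).2.1]; exact hYfin)).2 ?_
    exact (hWL j).trans (hWL (j + 1)).symm
  have hWY : ∀ j, volume (W j ∆ Y) = 0 := by
    intro j
    induction j with
    | zero => simp [hW0]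
    | succ j ih =>
      refine nonpos_iff_eq_zero.1 ((measure_symmDiff_le _ (W j) _).trans ?_)
      rw [ih, hWs, hstep, add_zero]
  have horb : ∀ j, volume (op (φ^[j + 1] s) Y ∆ Y) = 0 := by
    intro j
    refine nonpos_iff_eq_zero.1
      ((volume_symmDiff_le4 _ (op (φ^[j + 1] s) (W j)) (W j) _).trans ?_)
    rw [hstep, hWY, add_zero, add_zero, ← hWY j, symmDiff_comm (W j)]
    exact (hop _ _ hY).contract (hop _ _ (hW j).1) hY (hW j).1
  have hfix : ∀ v, volume (op v Y ∆ Y) = 0 := by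
    intro v
    obtain ⟨w, hw, hwv⟩ := mem_closure_iff_seq_limit.1 (hdense v)
    have h1 := tendsto_steiner hop hwv (A := fun _ => Y) (fun _ => hY) hY hYfin (by simp)
    refine nonpos_iff_eq_zero.1 (ge_of_tendsto' h1 fun i => ?_)
    obtain ⟨j, hj⟩ := hw i
    refine (measure_symmDiff_le _ (op (w i) Y) _).trans ?_
    rw [← hj, horb, add_zero, symmDiff_comm]
  have hball : volume (Y ∆ Metric.ball 0 ρ) = 0 :=
    eq_ball_of_fixed hY hYfin (hρ.trans hYv.symm) fun v => ⟨op v Y, hop v Y hY, hfix v⟩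
  have hanti : Antitone fun m => volume (Z m ∆ Metric.ball 0 ρ) := by
    refine antitone_nat_of_succ_le fun m => ?_
    rw [hZs]
    conv_lhs => rw [← op_ball hop (φ^[m + 2] s) ρ]
    exact (hop _ _ (hZ m)).contract (hop _ _ measurableSet_ball) (hZ m) measurableSet_ball
  rw [ENNReal.tendsto_atTop_zero]
  intro ε hε
  obtain ⟨k, hk⟩ := (hlim.eventually_le_const hε).exists
  refine ⟨τ k, fun m hm => (hanti hm).trans ((measure_symmDiff_le _ Y _).trans ?_)⟩
  rw [hball, add_zero]
  exact hk

end Iterates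

lemma volume_symmDiff_ball {d : ℕ} (r r' : ℝ) {ε : ℝ≥0∞}
    (h : volume (Metric.ball (0 : Euc d) r) ≤ volume (Metric.ball (0 : Euc d) r'))
    (h' : volume (Metric.ball (0 : Euc d) r') ≤ volume (Metric.ball (0 : Euc d) r) + ε) :
    volume (Metric.ball (0 : Euc d) r ∆ Metric.ball 0 r') ≤ ε := by
  rcases le_total r r' with hr | hr
  · have hs : Metric.ball (0 : Euc d) r ⊆ Metric.ball 0 r' := Metric.ball_subset_ball hr
    rw [Set.symmDiff_def, sdiff_eq_empty.2 hs, empty_union,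
      measure_sdiff hs measurableSet_ball.nullMeasurableSet measure_ball_lt_top.ne]
    exact tsub_le_iff_left.2 h'
  · have hs : Metric.ball (0 : Euc d) r' ⊆ Metric.ball 0 r := Metric.ball_subset_ball hr
    rw [Set.symmDiff_def, sdiff_eq_empty.2 hs, union_empty,
      measure_sdiff hs measurableSet_ball.nullMeasurableSet measure_ball_lt_top.ne]
    rw [tsub_eq_zero_of_le h]
    exact zero_le

end Steiner

/-- deterministic Steiner symmetrizations. If `φ` is continuous and
the orbit `{φ^n(s) : n ≥ 1}` of `s` is dense, then the successive Steiner
symmetrizations `X^{φ(s) ⋯ φ^n(s)}` of every measurable set of finite measure converge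
in measure to its spherical nonincreasing rearrangement. -/
theorem statement15 {d : ℕ} (hd : 1 ≤ d)
    (op : Metric.sphere (0 : Euc d) 1 → Set (Euc d) → Set (Euc d)) (hop : IsSteinerOp op)
    (star : Set (Euc d) → Set (Euc d)) (hstar : IsSphericalRearrangement star)
    (φ : Metric.sphere (0 : Euc d) 1 → Metric.sphere (0 : Euc d) 1) (hφ : Continuous φ)
    (s : Metric.sphere (0 : Euc d) 1)
    (hdense : Dense (Set.range fun n : ℕ => φ^[n + 1] s)) :
    ∀ X : Set (Euc d), MeasurableSet X → volume X < ⊤ →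
      Tendsto
        (fun n => volume (symmDiff (detIter op X (fun k => φ^[k + 1] s) n) (star X)))
        atTop (nhds 0) := by
  intro X hX hXfin
  rw [ENNReal.tendsto_atTop_zero]
  intro ε hε
  have hε3 : ε / 3 ≠ 0 := (ENNReal.div_pos hε.ne' (by simp)).ne'
  obtain ⟨K, hKX, hK, hKε⟩ := hX.exists_isCompact_sdiff_lt hXfin.ne hε3
  obtain ⟨⟨R, hR⟩, hvX⟩ := hstar X hX hXfin
  obtain ⟨⟨ρ, hρ⟩, hvK⟩ := hstar K hK.measurableSet hK.measure_lt_top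
  rw [hR] at hvX
  rw [hρ] at hvK
  have hlim := detIter_compact hop hφ hdense hK hvK
  obtain ⟨N, hN⟩ := ENNReal.tendsto_atTop_zero.1 hlim (ε / 3) (pos_iff_ne_zero.2 hε3)
  refine ⟨N, fun n hn => ?_⟩
  rw [hR]
  refine (volume_symmDiff_le4 _ (detIter op K (fun k => φ^[k + 1] s) n)
    (Metric.ball 0 ρ) _).trans ?_
  rw [← ENNReal.add_thirds ε]
  refine add_le_add (add_le_add ?_ (hN n hn)) ?_
  · refine (detIter_contract hop hX hK.measurableSet _ n).trans ?_
    rw [Set.symmDiff_def, Set.sdiff_eq_empty.2 hKX, Set.union_empty]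
    exact hKε.le
  · refine volume_symmDiff_ball ρ R ?_ ?_
    · rw [hvK, hvX]; exact measure_mono hKX
    · rw [hvK, hvX]
      refine (measure_le_inter_add_sdiff volume X K).trans ?_
      exact add_le_add (measure_mono Set.inter_subset_right) hKε.le
end
end

section
/- Fix ê ∈ 𝕊^{d-1} and let 𝒞^♯ be the truncated cap symmetrization space parametrized by {−1,1} × [0,∞), where (1,r) acts on ℳ(ℝ^d) as the cap symmetrization with parameter (ê,r) and (−1,r) acts as the cap symmetrization with parameter (−ê,0). Then 𝒞^♯, acting on the metric space (ℳ(ℝ^d), d₁), is a ⋆-compatible symmetrization space; in particular, any X ∈ ℳ(ℝ^d) satisfying m(X^s Δ X) = 0 for every s ∈ 𝒞^♯ satisfies m(X Δ X⋆) = 0. -/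
/-!
All claims follow from how a cap symmetrization acts on the spheres about its pole `r • e`.

*Polar coordinates.* For measurable `X`, `volume X` is a constant times `∫⁻ t, μH (X ∩ sphere p t)`
over `t > 0`, with `μH` the `(d - 1)`-dimensional Hausdorff measure (`exists_polar`). Mathlib gives
polar coordinates in terms of `Measure.toSphere`. This measure and `μH` are both finite on the unit
sphere, and rotation invariance makes the measure of a ball depend on its radius only, so they are
proportional (`uniform_proportional`, `toSphere_eq`).

*Cap symmetrizations.* On each sphere about the pole, the symmetrizations of two sets are concentric
caps, hence nested, with the measures of the original slices. So the measure of their symmetric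
difference is the difference of these measures and does not exceed the measure of the original
symmetric difference. Integrating over the radius gives nonexpansiveness
(`IsCapSymmOf.nonexpansive`); the same formula gives invariance of the volume. Hence a set has only
one cap symmetrization up to null sets, so the symmetrization is idempotent and fixes centered
balls, which meet each sphere about the pole in a cap (`IsCapSymmOf.ball`). Continuity in the
parameter holds because translating by `r • e` turns the symmetrization about `r • e` into that
about `0`, and translations act continuously on sets of finite measure (`tendsto_translate`).

*Fixed sets* (`fixed_eq_ball`). Let `A` be fixed by the whole space and let `B` be the centered ball
with `volume B = volume A`. The parameters `(e, 0)` and `(-e, 0)` together show that `A` is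
invariant under `x ↦ -x`. If `A` and `B` differ, then `A \ B` and `B \ A` both have positive
measure, and by antipodal symmetry there is a density point `a` of `A \ B` with `0 < ⟪e, a⟫` and a
density point `b` of `B \ A` with `⟪e, b⟫ < 0`. As `‖b‖ < ‖a‖`, some point `r • e` with `0 ≤ r` is
equidistant from `a` and `b`. A reflection through `r • e` carries `a` to `b`, so by density it
carries some `x` in `A \ B` to a point of `B \ A` on the same sphere about `r • e`. There `A`
(up to a null set) and `B` are nested caps, which is a contradiction.
-/

open MeasureTheory ProbabilityTheory Filter Topology RealInnerProductSpace NNReal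

noncomputable section

def IsCapSymmOf {d : ℕ} (e : Euc d) (r : ℝ) (X Y : Set (Euc d)) : Prop :=
  MeasurableSet Y ∧
  ∀ t : ℝ, 0 < t →
    (∃ c : ℝ, Y ∩ Metric.sphere (r • e) t =
      {y ∈ Metric.sphere (r • e) t | c < ⟪y - r • e, -e⟫}) ∧
    μH[(d : ℝ) - 1] (Y ∩ Metric.sphere (r • e) t) =
      μH[(d : ℝ) - 1] (X ∩ Metric.sphere (r • e) t)

/-- The action of the truncated cap symmetrization space `𝒞^♯`, parametrized by
`{-1, 1} × [0, ∞)` (here `Bool × ℝ≥0`): the parameter `(1, r)` acts as the cap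
symmetrization `(ê, r)` and `(-1, r)` acts as the cap symmetrization `(-ê, 0)`. -/
def truncCapAct {d : ℕ} (cap : Euc d → ℝ → Set (Euc d) → Set (Euc d)) (e : Euc d)
    (p : Bool × ℝ≥0) (X : Set (Euc d)) : Set (Euc d) :=
  if p.1 then cap e (p.2 : ℝ) X else cap (-e) 0 X

section Auxiliary

open Set Metric
open scoped Pointwise ENNReal

/-! ### Hausdorff measure of the unit sphere -/

/-- Radial projection onto the unit sphere is `2`-Lipschitz outside the unit ball. -/
lemma dist_normalize_le {E : Type*} [NormedAddCommGroup E] [NormedSpace ℝ E] {a b : E}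
    (ha : 1 ≤ ‖a‖) (hb : 1 ≤ ‖b‖) :
    dist (‖a‖⁻¹ • a) (‖b‖⁻¹ • b) ≤ 2 * dist a b := by
  have ha0 : 0 < ‖a‖ := by linarith
  have hb0 : 0 < ‖b‖ := by linarith
  have h : ‖a‖⁻¹ • a - ‖b‖⁻¹ • b
      = ‖a‖⁻¹ • ((a - b) + ((‖b‖ - ‖a‖) * ‖b‖⁻¹) • b) := by
    have e1 : ((‖b‖ - ‖a‖) * ‖b‖⁻¹) = 1 - ‖a‖ * ‖b‖⁻¹ := by field_simp
    rw [e1, smul_add, smul_smul, smul_sub, mul_sub, sub_smul, ← mul_assoc,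
      inv_mul_cancel₀ ha0.ne']
    simp
  rw [dist_eq_norm, h, norm_smul, norm_inv, norm_norm, dist_eq_norm]
  have h1 : ‖((‖b‖ - ‖a‖) * ‖b‖⁻¹) • b‖ ≤ ‖a - b‖ := by
    rw [norm_smul, norm_mul, norm_inv, norm_norm, mul_assoc, inv_mul_cancel₀ hb0.ne', mul_one,
      norm_sub_rev a b]
    exact abs_norm_sub_norm_le b a
  have h2 := norm_add_le (a - b) (((‖b‖ - ‖a‖) * ‖b‖⁻¹) • b)
  have h3 : ‖a‖⁻¹ ≤ 1 := inv_le_one_of_one_le₀ ha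
  calc ‖a‖⁻¹ * _ ≤ 1 * (‖a - b‖ + ‖a - b‖) := by gcongr; linarith
    _ = _ := by ring

/-- The parametrization of the part of the unit sphere over the face `x i = s` of the cube
`[-1, 1]ⁿ⁺¹`, where `s = 1` or `s = -1`: radial projection of the point of the face with remaining
coordinates `y`. -/
def facePatch (n : ℕ) (i : Fin (n + 1)) (s : ℝ) (y : Fin n → ℝ) : Euc (n + 1) :=
  ‖(WithLp.toLp 2 (Fin.insertNth i s y : Fin (n + 1) → ℝ) : Euc (n + 1))‖⁻¹ •
    WithLp.toLp 2 (Fin.insertNth i s y : Fin (n + 1) → ℝ)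

lemma facePatch_lipschitz (n : ℕ) (i : Fin (n + 1)) (s : ℝ) (hs : |s| = 1) :
    ∃ K, LipschitzWith K (facePatch n i s) := by
  have h1 : ∀ y : Fin n → ℝ,
      1 ≤ ‖(WithLp.toLp 2 (Fin.insertNth i s y : Fin (n + 1) → ℝ) : Euc (n + 1))‖ := by
    intro y
    have := PiLp.norm_apply_le
      (WithLp.toLp 2 (Fin.insertNth i s y : Fin (n + 1) → ℝ) : Euc (n + 1)) i
    simpa [hs] using this
  obtain ⟨C, hC⟩ : ∃ C, LipschitzWith C (WithLp.toLp 2 : (Fin (n + 1) → ℝ) → Euc (n + 1)) :=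
    ⟨_, PiLp.lipschitzWith_toLp 2 (fun _ : Fin (n + 1) => ℝ)⟩
  refine ⟨2 * C, LipschitzWith.of_dist_le_mul fun y z => ?_⟩
  have h2 : dist (Fin.insertNth i s y : Fin (n + 1) → ℝ) (Fin.insertNth i s z) ≤ dist y z := by
    rw [dist_pi_le_iff dist_nonneg]
    intro j
    refine Fin.succAboveCases i ?_ (fun k => ?_) j
    · simp
    · simpa using dist_le_pi_dist y z k
  calc dist (facePatch n i s y) (facePatch n i s z) ≤ 2 * dist _ _ := dist_normalize_le (h1 y) (h1 z)
    _ ≤ 2 * (C * dist y z) := by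
      gcongr
      exact (hC.dist_le_mul _ _).trans (by gcongr)
    _ = _ := by push_cast; ring

lemma sphere_subset_facePatch (n : ℕ) :
    sphere (0 : Euc (n + 1)) 1 ⊆
      ⋃ i : Fin (n + 1), (facePatch n i 1 '' closedBall 0 1 ∪ facePatch n i (-1) '' closedBall 0 1) := by
  intro x hx
  have hx1 : ‖x‖ = 1 := by simpa using hx
  obtain ⟨i, hi⟩ := Finite.exists_max (fun i => |x i|)
  have hpos : 0 < |x i| := by
    by_contra h
    have h0 : x = 0 := by
      ext j
      have := hi j
      have h' := abs_nonneg (x j)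
      simp only [PiLp.zero_apply]
      exact abs_eq_zero.1 (by linarith)
    rw [h0] at hx1; simp at hx1
  have key : ∀ s : ℝ, |s| = 1 → x i = |x i| * s → facePatch n i s (fun k => |x i|⁻¹ * x (i.succAbove k)) = x := by
    intro s hs hxi
    have e : (WithLp.toLp 2 (Fin.insertNth i s (fun k => |x i|⁻¹ * x (i.succAbove k)) : Fin (n + 1) → ℝ)
        : Euc (n + 1)) = |x i|⁻¹ • x := by
      ext j
      refine Fin.succAboveCases i ?_ (fun k => ?_) j
      · simp only [Fin.insertNth_apply_same, PiLp.smul_apply, smul_eq_mul]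
        rw [eq_inv_mul_iff_mul_eq₀ hpos.ne', ← hxi]
      · simp
    rw [facePatch, e, norm_smul, hx1, smul_smul]
    simp [hpos.ne']
  have hmem : (fun k => |x i|⁻¹ * x (i.succAbove k)) ∈ closedBall (0 : Fin n → ℝ) 1 := by
    rw [mem_closedBall_zero_iff, pi_norm_le_iff_of_nonneg zero_le_one]
    intro k
    rw [Real.norm_eq_abs, abs_mul, abs_inv, abs_abs, inv_mul_le_iff₀ hpos, mul_one]
    exact hi _
  rw [mem_iUnion]
  refine ⟨i, ?_⟩
  rcases le_total 0 (x i) with h | h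
  · exact Or.inl ⟨_, hmem, key 1 (by simp) (by rw [abs_of_nonneg h]; ring)⟩
  · exact Or.inr ⟨_, hmem, key (-1) (by simp) (by rw [abs_of_nonpos h]; ring)⟩

/-- The sphere is covered by finitely many Lipschitz images of cubes of dimension `n`. -/
lemma hausdorffMeasure_sphere_lt_top (n : ℕ) :
    μH[(n : ℝ)] (sphere (0 : Euc (n + 1)) 1) < ∞ := by
  have hf : ∀ i s, |s| = 1 → μH[(n : ℝ)] (facePatch n i s '' closedBall 0 1) < ∞ := by
    intro i s hs
    obtain ⟨K, hK⟩ := facePatch_lipschitz n i s hs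
    refine (hK.hausdorffMeasure_image_le n.cast_nonneg _).trans_lt ?_
    have : (μH[(n : ℝ)] : Measure (Fin n → ℝ)) = volume := by
      simpa using hausdorffMeasure_pi_real (ι := Fin n)
    rw [this]
    exact ENNReal.mul_lt_top (ENNReal.rpow_lt_top_of_nonneg n.cast_nonneg ENNReal.coe_ne_top)
      measure_closedBall_lt_top
  refine (measure_mono (sphere_subset_facePatch n)).trans_lt ?_
  refine (measure_iUnion_le _).trans_lt ?_
  rw [tsum_fintype]
  refine ENNReal.sum_lt_top.2 fun i _ => ?_
  exact (measure_union_le _ _).trans_lt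
    (ENNReal.add_lt_top.2 ⟨hf i 1 (by simp), hf i (-1) (by simp)⟩)

/-- The sphere projects onto the unit ball of dimension `n`, which has positive measure. -/
lemma hausdorffMeasure_sphere_ne_zero (n : ℕ) :
    μH[(n : ℝ)] (sphere (0 : Euc (n + 1)) 1) ≠ 0 := by
  intro h0
  let f : Euc (n + 1) → (Fin n → ℝ) := fun x k => x k.succ
  have hf : LipschitzWith 1 f := by
    refine LipschitzWith.of_dist_le_mul fun x y => ?_
    rw [NNReal.coe_one, one_mul, dist_pi_le_iff dist_nonneg]
    intro k
    have := PiLp.norm_apply_le (x - y) k.succ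
    simpa [dist_eq_norm] using this
  have h1 : μH[(n : ℝ)] (f '' sphere 0 1) ≤ 0 := by
    simpa [h0] using hf.hausdorffMeasure_image_le n.cast_nonneg (sphere 0 1)
  have : (μH[(n : ℝ)] : Measure (Fin n → ℝ)) = volume := by
    simpa using hausdorffMeasure_pi_real (ι := Fin n)
  rw [this] at h1
  have hopen : IsOpen {y : Fin n → ℝ | ∑ k, y k ^ 2 < 1} :=
    isOpen_lt (by fun_prop) continuous_const
  refine hopen.measure_ne_zero volume ⟨0, by simp⟩
    (le_antisymm ((measure_mono ?_).trans h1) zero_le)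
  intro y hy
  have hy : ∑ k, y k ^ 2 < 1 := hy
  refine ⟨WithLp.toLp 2 (Fin.cons (√(1 - ∑ k, y k ^ 2)) y), ?_, ?_⟩
  · rw [mem_sphere_zero_iff_norm, EuclideanSpace.norm_eq, Fin.sum_univ_succ]
    simp only [Fin.cons_zero, Fin.cons_succ, Real.norm_eq_abs, sq_abs]
    rw [Real.sq_sqrt (by linarith)]
    simp
  · ext k; simp [f]

/-! ### Uniformly distributed measures -/

section Uniform

variable {S : Type*} [MetricSpace S] [MeasurableSpace S] [BorelSpace S]
  [SecondCountableTopology S]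

/-- Computes the product measure of `{(x, y) | x ∈ K, dist x y < ρ}` in both orders: fixing `x`
gives the left side, fixing `y` bounds it by the right side. -/
lemma prod_near (μ σ : Measure S) [IsFiniteMeasure μ] [IsFiniteMeasure σ] {h r : ℝ≥0∞} {ρ : ℝ}
    (hμ : ∀ x, μ (ball x ρ) = h) (hσ : ∀ x, σ (ball x ρ) = r) {K : Set S}
    (hK : MeasurableSet K) :
    h * σ K ≤ r * μ (thickening ρ K) := by
  have hE : MeasurableSet {p : S × S | p.1 ∈ K ∧ dist p.1 p.2 < ρ} :=
    (measurable_fst hK).inter (measurableSet_lt (measurable_fst.dist measurable_snd) measurable_const)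
  have h1 : (σ.prod μ) {p : S × S | p.1 ∈ K ∧ dist p.1 p.2 < ρ} = h * σ K := by
    rw [Measure.prod_apply hE]
    have : ∀ x, μ (Prod.mk x ⁻¹' {p : S × S | p.1 ∈ K ∧ dist p.1 p.2 < ρ})
        = K.indicator (fun _ => h) x := by
      intro x
      by_cases hx : x ∈ K
      · rw [indicator_of_mem hx, ← hμ x]
        congr 1
        ext y; simp [hx, dist_comm]
      · simp [hx]
    simp_rw [this]
    rw [lintegral_indicator hK, lintegral_const, Measure.restrict_apply_univ]
  rw [← h1, Measure.prod_apply_symm hE]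
  have : ∀ y, σ ((fun x => (x, y)) ⁻¹' {p : S × S | p.1 ∈ K ∧ dist p.1 p.2 < ρ})
      ≤ (thickening ρ K).indicator (fun _ => r) y := by
    intro y
    by_cases hy : y ∈ thickening ρ K
    · rw [indicator_of_mem hy, ← hσ y]
      exact measure_mono fun x hx => hx.2
    · rw [indicator_of_notMem hy, nonpos_iff_eq_zero]
      convert measure_empty (μ := σ)
      rw [eq_empty_iff_forall_notMem]
      rintro x ⟨hx, hxy⟩
      exact hy (mem_thickening_iff.2 ⟨x, hx, by simpa [dist_comm] using hxy⟩)
  refine (lintegral_mono this).trans ?_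
  rw [lintegral_indicator isOpen_thickening.measurableSet, lintegral_const,
    Measure.restrict_apply_univ]

/-- Two finite measures whose balls have measures depending only on the radius are proportional. -/
lemma uniform_proportional (μ σ : Measure S) [IsFiniteMeasure μ] [IsFiniteMeasure σ]
    [σ.IsOpenPosMeasure]
    (hμ : ∀ x y r, μ (ball x r) = μ (ball y r)) (hσ : ∀ x y r, σ (ball x r) = σ (ball y r)) :
    μ univ • σ = σ univ • μ := by
  rcases isEmpty_or_nonempty S with hS | ⟨⟨x₀⟩⟩
  · rw [Measure.eq_zero_of_isEmpty μ, Measure.eq_zero_of_isEmpty σ]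
  have hclosed : ∀ K, IsClosed K → μ univ * σ K ≤ σ univ * μ K := by
    intro K hK
    have hstep : ∀ ρ > 0, μ univ * σ K ≤ σ univ * μ (thickening ρ K) := by
      intro ρ hρ
      have hpos : σ (ball x₀ ρ) ≠ 0 := (measure_ball_pos σ x₀ hρ).ne'
      have hfin : σ (ball x₀ ρ) ≠ ∞ := measure_ne_top _ _
      have e1 := prod_near μ σ (hμ · x₀ ρ) (hσ · x₀ ρ) hK.measurableSet
      have e3 : σ (ball x₀ ρ) * μ univ ≤ μ (ball x₀ ρ) * σ univ :=
        (prod_near σ μ (hσ · x₀ ρ) (hμ · x₀ ρ) MeasurableSet.univ).trans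
          (by gcongr; exact subset_univ _)
      rw [← ENNReal.mul_le_mul_iff_right hpos hfin]
      calc σ (ball x₀ ρ) * (μ univ * σ K) = (σ (ball x₀ ρ) * μ univ) * σ K := by ring
        _ ≤ (μ (ball x₀ ρ) * σ univ) * σ K := by gcongr
        _ = σ univ * (μ (ball x₀ ρ) * σ K) := by ring
        _ ≤ σ univ * (σ (ball x₀ ρ) * μ (thickening ρ K)) := by gcongr
        _ = _ := by ring
    have ht := tendsto_measure_thickening_of_isClosed (μ := μ) (s := K)
      ⟨1, one_pos, measure_ne_top _ _⟩ hK
    refine ge_of_tendsto (ENNReal.Tendsto.const_mul ht (Or.inr (measure_ne_top _ _))) ?_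
    filter_upwards [self_mem_nhdsWithin] with ρ hρ using hstep ρ hρ
  have hmeas : ∀ E, MeasurableSet E → μ univ * σ E ≤ σ univ * μ E := by
    intro E hE
    rw [hE.measure_eq_iSup_isClosed_of_ne_top (μ := σ) (measure_ne_top _ _)]
    simp_rw [ENNReal.mul_iSup]
    refine iSup_le fun K => iSup_le fun hKE => iSup_le fun hK => ?_
    exact (hclosed K hK).trans (by gcongr)
  ext E hE
  simp only [Measure.smul_apply, smul_eq_mul]
  refine le_antisymm (hmeas E hE) ?_
  have h1 := hmeas Eᶜ hE.compl
  have h2 : μ univ * σ E + μ univ * σ Eᶜ = σ univ * μ E + σ univ * μ Eᶜ := by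
    rw [← mul_add, ← mul_add, measure_add_measure_compl hE, measure_add_measure_compl hE, mul_comm]
  have hf : μ univ * σ Eᶜ ≠ ∞ := ENNReal.mul_ne_top (measure_ne_top _ _) (measure_ne_top _ _)
  rw [← ENNReal.add_le_add_iff_right hf, h2]
  gcongr

end Uniform

/-! ### Polar coordinates -/

/-- The Hausdorff measure of the sphere as a metric space agrees with its measure as a subset. -/
lemma muS_univ (n : ℕ) : (μH[(n : ℝ)] : Measure (sphere (0 : Euc (n + 1)) 1)) univ
    = μH[(n : ℝ)] (sphere (0 : Euc (n + 1)) 1) := by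
  rw [← isometry_subtype_coe.hausdorffMeasure_image (Or.inl n.cast_nonneg), image_univ,
    Subtype.range_coe]

lemma exists_isometry_sphere {n : ℕ} (x y : sphere (0 : Euc (n + 1)) 1) :
    ∃ L : Euc (n + 1) ≃ₗᵢ[ℝ] Euc (n + 1), L x = y := by
  refine ⟨(ℝ ∙ ((x : Euc (n + 1)) - y))ᗮ.reflection, ?_⟩
  apply Submodule.reflection_sub
  rw [mem_sphere_zero_iff_norm.1 x.2, mem_sphere_zero_iff_norm.1 y.2]

lemma image_ball_sphere {n : ℕ} (x y : sphere (0 : Euc (n + 1)) 1) (r : ℝ)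
    (L : Euc (n + 1) ≃ₗᵢ[ℝ] Euc (n + 1)) (hL : L x = y) :
    L '' ((↑) '' ball x r) = ((↑) '' ball y r : Set (Euc (n + 1))) := by
  ext z
  constructor
  · rintro ⟨_, ⟨u, hu, rfl⟩, rfl⟩
    refine ⟨⟨L u, by simp⟩, ?_, rfl⟩
    rw [mem_ball, Subtype.dist_eq] at hu ⊢
    simpa [← hL] using hu
  · rintro ⟨u, hu, rfl⟩
    refine ⟨L.symm u, ⟨⟨L.symm u, by simp⟩, ?_, rfl⟩, by simp⟩
    rw [mem_ball, Subtype.dist_eq] at hu ⊢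
    rw [← L.dist_map]
    simpa [hL] using hu

/-- The surface measure `toSphere` coming from Lebesgue measure is a multiple of the Hausdorff
measure on the unit sphere. -/
lemma toSphere_eq (n : ℕ) : ∃ κ : ℝ≥0∞, κ ≠ ∞ ∧
    (volume : Measure (Euc (n + 1))).toSphere = κ • (μH[(n : ℝ)] : Measure (sphere (0 : Euc (n + 1)) 1)) := by
  set μ := (μH[(n : ℝ)] : Measure (sphere (0 : Euc (n + 1)) 1))
  set σ := (volume : Measure (Euc (n + 1))).toSphere
  have hfin : μ univ ≠ ∞ := by rw [muS_univ]; exact (hausdorffMeasure_sphere_lt_top n).ne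
  have hpos : μ univ ≠ 0 := by rw [muS_univ]; exact hausdorffMeasure_sphere_ne_zero n
  have : IsFiniteMeasure μ := ⟨hfin.lt_top⟩
  have key := uniform_proportional μ σ ?_ ?_
  · refine ⟨(μ univ)⁻¹ * σ univ,
      ENNReal.mul_ne_top (ENNReal.inv_ne_top.2 hpos) (measure_ne_top _ _), ?_⟩
    rw [mul_smul, ← key, smul_smul, ENNReal.inv_mul_cancel hpos hfin, one_smul]
  · intro x y r
    obtain ⟨L, hL⟩ := exists_isometry_sphere x y
    have hs : ∀ s : Set (sphere (0 : Euc (n + 1)) 1),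
        μ s = μH[(n : ℝ)] (Subtype.val '' s : Set (Euc (n + 1))) := fun s =>
      (isometry_subtype_coe.hausdorffMeasure_image (Or.inl n.cast_nonneg) s).symm
    rw [hs, hs, ← image_ball_sphere x y r L hL, L.isometry.hausdorffMeasure_image (Or.inl n.cast_nonneg)]
  · intro x y r
    obtain ⟨L, hL⟩ := exists_isometry_sphere x y
    rw [Measure.toSphere_apply' _ measurableSet_ball, Measure.toSphere_apply' _ measurableSet_ball,
      ← image_ball_sphere x y r L hL]
    congr 1
    have : Ioo (0 : ℝ) 1 • (L '' ((↑) '' ball x r)) = L '' (Ioo (0 : ℝ) 1 • ((↑) '' ball x r)) := by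
      ext z
      simp only [Set.mem_smul, mem_image]
      constructor
      · rintro ⟨a, ha, _, ⟨_, ⟨u, hu, rfl⟩, rfl⟩, rfl⟩
        exact ⟨a • u, ⟨a, ha, _, ⟨u, hu, rfl⟩, rfl⟩, by simp⟩
      · rintro ⟨_, ⟨a, ha, _, ⟨u, hu, rfl⟩, rfl⟩, rfl⟩
        exact ⟨a, ha, _, ⟨_, ⟨u, hu, rfl⟩, rfl⟩, by simp⟩
    rw [this, L.image_eq_preimage_symm]
    exact (L.symm.measurePreserving.measure_preimage_equiv (f := L.symm.toMeasurableEquiv) _).symm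

/-- Scaling a slice by a sphere of radius `t` to the unit sphere. -/
lemma hausdorffMeasure_slice (n : ℕ) (p : Euc (n + 1)) {t : ℝ} (ht : 0 < t)
    (X : Set (Euc (n + 1))) :
    μH[(n : ℝ)] (X ∩ sphere p t) = ENNReal.ofReal (t ^ n) *
      μH[(n : ℝ)] {u : sphere (0 : Euc (n + 1)) 1 | p + t • (u : Euc (n + 1)) ∈ X} := by
  have e : X ∩ sphere p t = (p + ·) '' (t • ((↑) '' {u : sphere (0 : Euc (n + 1)) 1 |
      p + t • (u : Euc (n + 1)) ∈ X})) := by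
    ext z
    constructor
    · rintro ⟨hz, hzt⟩
      rw [mem_sphere_iff_norm] at hzt
      have h1 : t • (t⁻¹ • (z - p)) = z - p := by rw [smul_smul, mul_inv_cancel₀ ht.ne', one_smul]
      refine ⟨z - p, ⟨t⁻¹ • (z - p), ⟨⟨t⁻¹ • (z - p), ?_⟩, ?_, rfl⟩, h1⟩, by simp⟩
      · rw [mem_sphere_zero_iff_norm, norm_smul, hzt, norm_inv, Real.norm_of_nonneg ht.le,
          inv_mul_cancel₀ ht.ne']
      · simpa [h1] using hz
    · rintro ⟨_, ⟨_, ⟨u, hu, rfl⟩, rfl⟩, rfl⟩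
      refine ⟨hu, ?_⟩
      simp [norm_smul, abs_of_pos ht]
  rw [e, (isometry_add_left p).hausdorffMeasure_image (Or.inl n.cast_nonneg),
    Measure.hausdorffMeasure_smul₀ n.cast_nonneg ht.ne',
    isometry_subtype_coe.hausdorffMeasure_image (Or.inl n.cast_nonneg), ENNReal.smul_def, smul_eq_mul]
  congr 1
  rw [NNReal.rpow_natCast, ENNReal.ofReal, Real.toNNReal_pow ht.le, Real.toNNReal_eq_nnnorm_of_nonneg ht.le]

/-- Polar coordinates around `p`, expressed with Hausdorff measures of spherical slices. -/
lemma volume_polar (n : ℕ) : ∃ κ : ℝ≥0∞, ∀ (p : Euc (n + 1)) (X : Set (Euc (n + 1))),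
    MeasurableSet X →
    volume X = κ * ∫⁻ t in Ioi (0 : ℝ), μH[(n : ℝ)] (X ∩ sphere p t) := by
  obtain ⟨κ, hκtop, hκ⟩ := toSphere_eq n
  refine ⟨κ, fun p X hX => ?_⟩
  set Y : Set (Euc (n + 1)) := (p + ·) ⁻¹' X with hYdef
  have hY : MeasurableSet Y := (measurable_const_add p) hX
  have hdim : Module.finrank ℝ (Euc (n + 1)) - 1 = n := by simp
  have hmp := (volume : Measure (Euc (n + 1))).measurePreserving_homeomorphUnitSphereProd
  rw [hdim] at hmp
  have hms : MeasurableSet ({0}ᶜ : Set (Euc (n + 1))) := (measurableSet_singleton _).compl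
  have hslice : MeasurableSet
      {q : sphere (0 : Euc (n + 1)) 1 × Ioi (0 : ℝ) | p + (q.2 : ℝ) • (q.1 : Euc (n + 1)) ∈ X} := by
    refine (Continuous.measurable ?_) hX
    fun_prop
  have h1 : volume X = ((volume : Measure (Euc (n + 1))).comap ((↑) : ({0}ᶜ : Set (Euc (n + 1))) → _))
      ((↑) ⁻¹' Y) := by
    rw [comap_subtype_coe_apply hms, Subtype.image_preimage_coe, inter_comm, ← sdiff_eq,
      measure_sdiff_null (measure_singleton _), hYdef, measure_preimage_add]
  have h2 : (((↑) ⁻¹' Y : Set ({0}ᶜ : Set (Euc (n + 1)))))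
      = homeomorphUnitSphereProd (Euc (n + 1)) ⁻¹'
        {q | p + (q.2 : ℝ) • (q.1 : Euc (n + 1)) ∈ X} := by
    ext x
    have hx : ‖(x : Euc (n + 1))‖ ≠ 0 := norm_ne_zero_iff.2 x.2
    simp [hYdef, smul_smul, mul_inv_cancel₀ hx]
  rw [h1, h2, hmp.measure_preimage hslice.nullMeasurableSet, Measure.prod_apply_symm hslice,
    Measure.volumeIoiPow, lintegral_withDensity_eq_lintegral_mul _ (by fun_prop)
      (measurable_measure_prodMk_right hslice), hκ, ← lintegral_subtype_comap measurableSet_Ioi,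
    ← lintegral_const_mul']
  · refine lintegral_congr fun t => ?_
    rw [hausdorffMeasure_slice n p t.2]
    simp only [Pi.mul_apply, Measure.smul_apply, smul_eq_mul]
    rw [mul_left_comm]
    rfl
  · exact hκtop

variable {d : ℕ}

lemma exists_polar (hd : 1 ≤ d) : ∃ κ : ℝ≥0∞, ∀ (p : Euc d) (X : Set (Euc d)),
    MeasurableSet X →
    volume X = κ * ∫⁻ t in Ioi (0 : ℝ), μH[(d : ℝ) - 1] (X ∩ sphere p t) := by
  obtain ⟨n, rfl⟩ := Nat.exists_eq_add_of_le' hd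
  have : (((n + 1 : ℕ) : ℝ) - 1) = n := by push_cast; ring
  rw [this]
  exact volume_polar n

lemma sphere_finite (hd : 1 ≤ d) (p : Euc d) {t : ℝ} (ht : 0 < t) (X : Set (Euc d)) :
    μH[(d : ℝ) - 1] (X ∩ sphere p t) ≠ ∞ := by
  obtain ⟨n, rfl⟩ := Nat.exists_eq_add_of_le' hd
  have : (((n + 1 : ℕ) : ℝ) - 1) = n := by push_cast; ring
  rw [this, hausdorffMeasure_slice n p ht]
  refine ENNReal.mul_ne_top ENNReal.ofReal_ne_top (ne_top_of_le_ne_top ?_ (measure_mono (subset_univ _)))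
  rw [muS_univ]
  exact (hausdorffMeasure_sphere_lt_top n).ne

/-! ### Cap symmetrizations -/

namespace IsCapSymmOf

variable {e : Euc d} {r : ℝ} {A A' B B' : Set (Euc d)}

/-- Concentric caps about the same axis are nested. -/
lemma nested (hA : IsCapSymmOf e r A A') (hB : IsCapSymmOf e r B B') {t : ℝ} (ht : 0 < t) :
    A' ∩ sphere (r • e) t ⊆ B' ∩ sphere (r • e) t ∨
      B' ∩ sphere (r • e) t ⊆ A' ∩ sphere (r • e) t := by
  obtain ⟨⟨a, ha⟩, -⟩ := hA.2 t ht
  obtain ⟨⟨b, hb⟩, -⟩ := hB.2 t ht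
  rw [ha, hb]
  rcases le_total a b with h | h
  · exact Or.inr fun y hy => ⟨hy.1, h.trans_lt hy.2⟩
  · exact Or.inl fun y hy => ⟨hy.1, h.trans_lt hy.2⟩

/-- Nonexpansiveness on a single sphere, for nested caps. -/
lemma slice_diff_le (hd : 1 ≤ d) (hA : IsCapSymmOf e r A A') (hB : IsCapSymmOf e r B B') {t : ℝ}
    (ht : 0 < t) (h : A' ∩ sphere (r • e) t ⊆ B' ∩ sphere (r • e) t) :
    μH[(d : ℝ) - 1] (symmDiff A' B' ∩ sphere (r • e) t) ≤
      μH[(d : ℝ) - 1] (symmDiff A B ∩ sphere (r • e) t) := by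
  have e1 : symmDiff A' B' ∩ sphere (r • e) t
      = (B' ∩ sphere (r • e) t) \ (A' ∩ sphere (r • e) t) := by
    ext x
    have := @h x
    simp only [Set.mem_symmDiff, mem_inter_iff, Set.mem_sdiff] at this ⊢
    tauto
  have e2 : (B ∩ sphere (r • e) t) \ (A ∩ sphere (r • e) t) ⊆ symmDiff A B ∩ sphere (r • e) t := by
    intro x
    simp only [Set.mem_symmDiff, mem_inter_iff, Set.mem_sdiff]
    tauto
  rw [e1, measure_sdiff h (hA.1.inter isClosed_sphere.measurableSet).nullMeasurableSet
    (sphere_finite hd _ ht _), (hA.2 t ht).2, (hB.2 t ht).2]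
  exact le_measure_sdiff.trans (measure_mono e2)

/-- Cap symmetrization does not increase `m(A Δ B)`. -/
lemma nonexpansive (hd : 1 ≤ d) (hA : IsCapSymmOf e r A A') (hB : IsCapSymmOf e r B B')
    (hAm : MeasurableSet A) (hBm : MeasurableSet B) :
    volume (symmDiff A' B') ≤ volume (symmDiff A B) := by
  obtain ⟨κ, hκ⟩ := exists_polar hd
  rw [hκ (r • e) _ (hA.1.symmDiff hB.1), hκ (r • e) _ (hAm.symmDiff hBm)]
  gcongr κ * ?_
  refine setLIntegral_mono' measurableSet_Ioi fun t ht => ?_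
  rcases hA.nested hB ht with h | h
  · exact hA.slice_diff_le hd hB ht h
  · rw [symmDiff_comm A', symmDiff_comm A]
    exact hB.slice_diff_le hd hA ht h

lemma volume_eq (hd : 1 ≤ d) (hA : IsCapSymmOf e r A A') (hAm : MeasurableSet A) :
    volume A' = volume A := by
  obtain ⟨κ, hκ⟩ := exists_polar hd
  rw [hκ (r • e) _ hA.1, hκ (r • e) _ hAm]
  congr 1
  exact setLIntegral_congr_fun measurableSet_Ioi fun t ht => (hA.2 t ht).2

/-- A cap symmetrization is a cap symmetrization of itself, whence idempotence. -/
lemma self (hA : IsCapSymmOf e r A A') : IsCapSymmOf e r A' A' :=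
  ⟨hA.1, fun t ht => ⟨(hA.2 t ht).1, rfl⟩⟩

/-- Two cap symmetrizations of the same set agree up to a null set. -/
lemma unique (hd : 1 ≤ d) (hA : IsCapSymmOf e r A A') (hB : IsCapSymmOf e r A B')
    (hAm : MeasurableSet A) : volume (symmDiff A' B') = 0 := by
  simpa using hA.nonexpansive hd hB hAm hAm

/-- Balls about the origin are cap symmetric: on a sphere about `r • e`, the squared norm is an affine
function of `⟪y - r • e, -e⟫` with slope `-2 r ≤ 0`. -/
lemma ball (he : ‖e‖ = 1) (hr : 0 ≤ r) (R : ℝ) :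
    IsCapSymmOf e r (Metric.ball 0 R) (Metric.ball 0 R) := by
  refine ⟨measurableSet_ball, fun t ht => ⟨?_, rfl⟩⟩
  have hexp : ∀ y ∈ sphere (r • e) t, ‖y‖ ^ 2 = t ^ 2 + r ^ 2 - 2 * r * ⟪y - r • e, -e⟫ := by
    intro y hy
    rw [mem_sphere_iff_norm] at hy
    have h1 : ‖(y - r • e) + r • e‖ ^ 2 = _ := norm_add_sq_real (y - r • e) (r • e)
    rw [sub_add_cancel, hy, norm_smul, he, inner_smul_right, Real.norm_of_nonneg hr] at h1
    rw [inner_neg_right]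
    linarith
  have hcs : ∀ y ∈ sphere (r • e) t, |⟪y - r • e, -e⟫| ≤ t := by
    intro y hy
    rw [mem_sphere_iff_norm] at hy
    have := abs_real_inner_le_norm (y - r • e) (-e)
    rwa [norm_neg, he, hy, mul_one] at this
  rcases le_or_gt R 0 with hR | hR
  · refine ⟨t, ?_⟩
    rw [Metric.ball_eq_empty.2 hR, empty_inter, eq_comm, eq_empty_iff_forall_notMem]
    rintro y ⟨hy, hlt⟩
    exact absurd hlt (not_lt.2 ((le_abs_self _).trans (hcs y hy)))
  have hmem : ∀ y : Euc d, y ∈ Metric.ball 0 R ↔ ‖y‖ ^ 2 < R ^ 2 := by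
    intro y
    rw [mem_ball_zero_iff, sq_lt_sq₀ (norm_nonneg _) hR.le]
  rcases hr.eq_or_lt with rfl | hr
  · rcases lt_or_ge t R with h | h
    · refine ⟨-t - 1, Set.ext fun y => ?_⟩
      refine ⟨fun hy => ⟨hy.2, ?_⟩, fun hy => ⟨?_, hy.1⟩⟩
      · linarith [neg_abs_le (⟪y - (0 : ℝ) • e, -e⟫ : ℝ), hcs y hy.2]
      · rw [hmem, hexp y hy.1]; nlinarith
    · refine ⟨t, Set.ext fun y => ?_⟩
      refine ⟨fun hy => ?_, fun hy => ?_⟩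
      · have := (hmem y).1 hy.1
        rw [hexp y hy.2] at this
        nlinarith
      · exact absurd hy.2 (not_lt.2 ((le_abs_self _).trans (hcs y hy.1)))
  · refine ⟨(t ^ 2 + r ^ 2 - R ^ 2) / (2 * r), Set.ext fun y => ?_⟩
    simp only [mem_inter_iff, mem_ofPred_eq, hmem]
    rw [and_comm]
    refine and_congr_right fun hy => ?_
    rw [hexp y hy, div_lt_iff₀ (by positivity)]
    constructor <;> intro h <;> linarith

/-- Translating by `r • e` moves the pole to the origin. -/
lemma translate (hA : IsCapSymmOf e r A A') :
    IsCapSymmOf e 0 ((r • e + ·) ⁻¹' A) ((r • e + ·) ⁻¹' A') := by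
  refine ⟨(measurable_const_add _) hA.1, fun t ht => ?_⟩
  have hs : ∀ X : Set (Euc d), (r • e + ·) ⁻¹' X ∩ sphere ((0 : ℝ) • e) t
      = (r • e + ·) ⁻¹' (X ∩ sphere (r • e) t) := by
    intro X; ext y; simp
  obtain ⟨⟨c, hc⟩, hm⟩ := hA.2 t ht
  refine ⟨⟨c, ?_⟩, ?_⟩
  · rw [hs, hc]; ext y; simp
  · rw [hs, hs]
    have : ∀ X : Set (Euc d), μH[(d : ℝ) - 1] ((r • e + ·) ⁻¹' X) = μH[(d : ℝ) - 1] X :=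
      (IsometryEquiv.addLeft (r • e)).hausdorffMeasure_preimage ((d : ℝ) - 1)
    rw [this, this, hm]

/-- Reflecting a cap symmetrization about the origin reverses its axis. -/
lemma neg (hA : IsCapSymmOf e 0 A A') : IsCapSymmOf (-e) 0 A (Neg.neg ⁻¹' A') := by
  refine ⟨measurable_neg hA.1, fun t ht => ?_⟩
  have hs : Neg.neg ⁻¹' A' ∩ sphere ((0 : ℝ) • (-e)) t
      = Neg.neg ⁻¹' (A' ∩ sphere ((0 : ℝ) • e) t) := by
    ext y; simp
  obtain ⟨⟨c, hc⟩, hm⟩ := hA.2 t ht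
  refine ⟨⟨c, ?_⟩, ?_⟩
  · rw [hs, hc]; ext y; simp
  · rw [hs]
    have := (IsometryEquiv.neg (Euc d)).hausdorffMeasure_preimage ((d : ℝ) - 1)
      (A' ∩ sphere ((0 : ℝ) • e) t)
    refine this.trans ?_
    rw [hm]; simp

end IsCapSymmOf

/-- Translation along the axis is continuous on sets of finite measure. -/
lemma tendsto_translate (e : Euc d) (r : ℝ) {C : Set (Euc d)} (hC : MeasurableSet C)
    (hCf : volume C < ∞) :
    Tendsto (fun t : ℝ => volume (symmDiff ((t • e + ·) ⁻¹' C) ((r • e + ·) ⁻¹' C))) (𝓝 r)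
      (𝓝 0) := by
  let F : C(ℝ × Euc d, Euc d) := ⟨fun p => p.1 • e + p.2, by fun_prop⟩
  exact tendsto_measure_symmDiff_preimage_nhds_zero (μ := volume) (ν := volume)
    (f := fun t => F.curry t) (g := F.curry r) (F.curry.continuous.tendsto r)
    (.of_forall fun t => measurePreserving_add_left volume (t • e))
    (measurePreserving_add_left volume (r • e)) hC.nullMeasurableSet hCf.ne

/-! ### Fixed sets -/

/-- A nonnull set invariant under `x ↦ -x` up to a null set charges every half-space bounded by a
hyperplane through the origin. -/
lemma volume_halfspace_ne_zero {e : Euc d} (he : ‖e‖ = 1) {X : Set (Euc d)}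
    (hX : MeasurableSet X) (hsym : volume (symmDiff X (Neg.neg ⁻¹' X)) = 0) (h0 : volume X ≠ 0) :
    volume (X ∩ {x | 0 < ⟪e, x⟫}) ≠ 0 := by
  intro h
  apply h0
  have hplane : volume {x : Euc d | ⟪e, x⟫ = 0} = 0 := by
    have : {x : Euc d | ⟪e, x⟫ = 0} = ((ℝ ∙ e)ᗮ : Submodule ℝ (Euc d)) := by
      ext x; simp [Submodule.mem_orthogonal_singleton_iff_inner_right]
    rw [this]
    refine Measure.addHaar_submodule volume _ fun htop => ?_
    have : e ∈ (ℝ ∙ e)ᗮ := htop ▸ Submodule.mem_top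
    rw [Submodule.mem_orthogonal_singleton_iff_inner_right, real_inner_self_eq_norm_sq, he] at this
    norm_num at this
  have hneg : volume (Neg.neg ⁻¹' (X ∩ {x | 0 < ⟪e, x⟫})) = 0 := by
    rwa [(Measure.measurePreserving_neg volume).measure_preimage
      (hX.inter (measurableSet_lt measurable_const (by fun_prop))).nullMeasurableSet]
  refine measure_mono_null (fun x hx => ?_)
    (measure_union_null (measure_union_null h hplane) (measure_union_null hneg hsym))
  by_cases hnx : -x ∈ X
  · rcases lt_trichotomy ⟪e, x⟫ (0 : ℝ) with h | h | h
    · exact Or.inr (Or.inl ⟨hnx, by simpa using h⟩)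
    · exact Or.inl (Or.inr h)
    · exact Or.inl (Or.inl ⟨hx, h⟩)
  · exact Or.inr (Or.inr (Or.inl ⟨hx, hnx⟩))

/-- If `a` and `b` are density points of `P` and `Q` and `ρ` is an isometry with `ρ a = b`, then `P`
meets the preimage of `Q`: both occupy more than half of a small ball about `a`. -/
lemma exists_mem_of_density {P Q : Set (Euc d)} (hQ : MeasurableSet Q)
    {a b : Euc d} (ρ : Euc d ≃ᵢ Euc d) (hρm : MeasurePreserving ρ volume volume) (hρ : ρ a = b)
    (ha : Tendsto (fun ε => volume (P ∩ closedBall a ε) / volume (closedBall a ε)) (𝓝[>] 0) (𝓝 1))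
    (hb : Tendsto (fun ε => volume (Q ∩ closedBall b ε) / volume (closedBall b ε)) (𝓝[>] 0) (𝓝 1)) :
    ∃ x ∈ P, ρ x ∈ Q := by
  by_contra! hno
  have hhalf : (1 / 2 : ℝ≥0∞) < 1 := by simp
  obtain ⟨ε, ⟨hε1, hε2⟩, hε⟩ := (((ha.eventually (lt_mem_nhds hhalf)).and
    (hb.eventually (lt_mem_nhds hhalf))).and self_mem_nhdsWithin).exists
  have hε : 0 < ε := hε
  have hv0 : volume (closedBall a ε) ≠ 0 := (measure_closedBall_pos _ _ hε).ne'
  have hvt : volume (closedBall a ε) ≠ ∞ := measure_closedBall_lt_top.ne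
  have hba : volume (closedBall b ε) = volume (closedBall a ε) := by
    rw [Measure.addHaar_closedBall_center, ← Measure.addHaar_closedBall_center _ a]
  rw [hba] at hε2
  rw [ENNReal.lt_div_iff_mul_lt (Or.inl hv0) (Or.inl hvt)] at hε1 hε2
  have hpre : ρ ⁻¹' (Q ∩ closedBall b ε) = ρ ⁻¹' Q ∩ closedBall a ε := by
    ext x; simp [← hρ]
  have hQm := (hQ.inter (measurableSet_closedBall (x := b) (ε := ε)))
  rw [← hρm.measure_preimage hQm.nullMeasurableSet, hpre] at hε2
  have hdisj : Disjoint (P ∩ closedBall a ε) (ρ ⁻¹' Q ∩ closedBall a ε) := by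
    rw [Set.disjoint_left]
    rintro x ⟨hx, -⟩ ⟨hx', -⟩
    exact hno x hx hx'
  have h3 := ENNReal.add_lt_add hε1 hε2
  rw [← measure_union hdisj (hpre ▸ ρ.continuous.measurable hQm), ← add_mul, ENNReal.add_halves, one_mul] at h3
  exact absurd h3 (not_lt.2 (measure_mono (union_subset inter_subset_right inter_subset_right)))

/-- An isometry fixing `c` and carrying `a` to `b`, for `a` and `b` equidistant from `c`: a reflection
in a hyperplane through `c`. -/
lemma exists_reflection (c a b : Euc d) (h : ‖a - c‖ = ‖b - c‖) :
    ∃ ρ : Euc d ≃ᵢ Euc d, MeasurePreserving ρ volume volume ∧ ρ a = b ∧ ρ c = c := by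
  let L : Euc d ≃ₗᵢ[ℝ] Euc d := (ℝ ∙ ((a - c) - (b - c)))ᗮ.reflection
  have hL : L (a - c) = b - c := Submodule.reflection_sub h
  refine ⟨((IsometryEquiv.subRight c).trans L.toIsometryEquiv).trans (IsometryEquiv.addRight c),
    ?_, ?_, ?_⟩
  · exact (measurePreserving_add_right volume c).comp
      (L.measurePreserving.comp (measurePreserving_sub_right volume c))
  · change L (a - c) + c = b
    rw [hL]; simp
  · change L (c - c) + c = c
    simp

/-- A set with the volume of a centered ball that is fixed by the cap symmetrizations of `𝒞^♯`
is that ball up to a null set. -/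
lemma fixed_eq_ball (hd : 1 ≤ d) {e : Euc d} (he : ‖e‖ = 1) {A : Set (Euc d)} {R : ℝ}
    (hA : MeasurableSet A) (hAf : volume A < ∞) (hAB : volume (ball (0 : Euc d) R) = volume A)
    (C : ℝ → Set (Euc d)) (hC : ∀ r, 0 ≤ r → IsCapSymmOf e r A (C r))
    (hCA : ∀ r, 0 ≤ r → volume (symmDiff (C r) A) = 0)
    {D : Set (Euc d)} (hD : IsCapSymmOf (-e) 0 A D) (hDA : volume (symmDiff D A) = 0) :
    volume (symmDiff A (ball 0 R)) = 0 := by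
  set B : Set (Euc d) := ball 0 R with hB
  have hBm : MeasurableSet B := measurableSet_ball
  -- `A` is symmetric about the origin, being a cap on both sides.
  have hsym : volume (symmDiff A (Neg.neg ⁻¹' A)) = 0 := by
    have h0 := hC 0 le_rfl
    have h1 := h0.neg.unique hd hD hA
    have h2 : volume (symmDiff (Neg.neg ⁻¹' A) (Neg.neg ⁻¹' (C 0))) = 0 := by
      rw [← preimage_symmDiff, symmDiff_comm,
        (Measure.measurePreserving_neg volume).measure_preimage
        (h0.1.symmDiff hA).nullMeasurableSet, hCA 0 le_rfl]
    rw [measure_symmDiff_eq_zero_iff] at *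
    exact ((h2.trans h1).trans hDA).symm
  have hBsym : Neg.neg ⁻¹' B = B := by ext x; simp [hB]
  have hPsym : volume (symmDiff (A \ B) (Neg.neg ⁻¹' (A \ B))) = 0 := by
    rw [measure_symmDiff_eq_zero_iff] at *
    rw [preimage_sdiff, hBsym]
    exact hsym.diff (ae_eq_refl _)
  have hQsym : volume (symmDiff (B \ A) (Neg.neg ⁻¹' (B \ A))) = 0 := by
    rw [measure_symmDiff_eq_zero_iff] at *
    rw [preimage_sdiff, hBsym]
    exact (ae_eq_refl B).diff hsym
  have hPQ : volume (A \ B) = volume (B \ A) := by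
    have h1 := measure_sdiff_add_inter (μ := volume) A hBm
    have h2 := measure_sdiff_add_inter (μ := volume) B hA
    rw [inter_comm, hB, hAB, ← hB, ← h1] at h2
    exact ((ENNReal.add_left_inj (measure_ne_top_of_subset inter_subset_left hAf.ne)).1 h2).symm
  by_contra hne
  have hP0 : volume (A \ B) ≠ 0 := by
    intro h
    exact hne (measure_union_null h (hPQ ▸ h))
  have hQ0 : volume (B \ A) ≠ 0 := hPQ ▸ hP0
  have hP := volume_halfspace_ne_zero he (hA.diff hBm) hPsym hP0
  have hQ := volume_halfspace_ne_zero (by rwa [norm_neg] : ‖-e‖ = 1) (hBm.diff hA) hQsym hQ0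
  obtain ⟨a, ⟨haP, hae⟩, ha⟩ : ∃ a ∈ (A \ B) ∩ {x | 0 < ⟪e, x⟫},
      Tendsto (fun ε => volume ((A \ B) ∩ closedBall a ε) / volume (closedBall a ε))
        (𝓝[>] 0) (𝓝 1) := by
    have h := ae_restrict_iff' (hA.diff hBm) |>.1 (Besicovitch.ae_tendsto_measure_inter_div volume (A \ B))
    obtain ⟨a, ha, ha'⟩ := ((frequently_ae_mem_iff.2 hP).and_eventually h).exists
    exact ⟨a, ha, ha' ha.1⟩
  obtain ⟨b, ⟨hbQ, hbe⟩, hb⟩ : ∃ b ∈ (B \ A) ∩ {x | 0 < ⟪-e, x⟫},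
      Tendsto (fun ε => volume ((B \ A) ∩ closedBall b ε) / volume (closedBall b ε))
        (𝓝[>] 0) (𝓝 1) := by
    have h := ae_restrict_iff' (hBm.diff hA) |>.1 (Besicovitch.ae_tendsto_measure_inter_div volume (B \ A))
    obtain ⟨b, hb, hb'⟩ := ((frequently_ae_mem_iff.2 hQ).and_eventually h).exists
    exact ⟨b, hb, hb' hb.1⟩
  have hae : 0 < ⟪e, a⟫ := hae
  have hbe : ⟪e, b⟫ < (0 : ℝ) := by
    have : 0 < ⟪-e, b⟫ := hbe
    rw [inner_neg_left] at this; linarith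
  have hab : ‖b‖ < ‖a‖ := by
    have h1 := haP.2
    have h2 := hbQ.1
    rw [hB, mem_ball_zero_iff] at h1 h2
    linarith
  -- the point of the axis equidistant from `a` and `b`
  set r : ℝ := (‖a‖ ^ 2 - ‖b‖ ^ 2) / (2 * (⟪e, a⟫ - ⟪e, b⟫)) with hr
  have hr0 : 0 ≤ r := by
    refine div_nonneg ?_ (by linarith)
    have := norm_nonneg b
    nlinarith
  have hdist : ‖a - r • e‖ = ‖b - r • e‖ := by
    rw [← sq_eq_sq₀ (norm_nonneg _) (norm_nonneg _), norm_sub_sq_real, norm_sub_sq_real,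
      inner_smul_right, inner_smul_right, real_inner_comm, real_inner_comm e b]
    have : r * (2 * (⟪e, a⟫ - ⟪e, b⟫)) = ‖a‖ ^ 2 - ‖b‖ ^ 2 :=
      div_mul_cancel₀ _ (by linarith)
    linarith
  obtain ⟨ρ, hρm, hρ, hρc⟩ := exists_reflection (r • e) a b hdist
  have hAC := measure_symmDiff_eq_zero_iff.1 (hCA r hr0)
  have hPC : ∀ ε, volume ((A \ B) ∩ closedBall a ε) = volume ((C r \ B) ∩ closedBall a ε) :=
    fun ε => measure_congr ((hAC.symm.diff (ae_eq_refl _)).inter (ae_eq_refl _))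
  have hQC : ∀ ε, volume ((B \ A) ∩ closedBall b ε) = volume ((B \ C r) ∩ closedBall b ε) :=
    fun ε => measure_congr (((ae_eq_refl _).diff hAC.symm).inter (ae_eq_refl _))
  simp_rw [hPC] at ha
  simp_rw [hQC] at hb
  obtain ⟨x, hx, hρx⟩ := exists_mem_of_density (hBm.diff (hC r hr0).1) ρ hρm hρ ha hb
  have hxt : 0 < dist x (r • e) := by
    refine dist_pos.2 fun h => ?_
    rw [h, hρc] at hρx
    rw [h] at hx
    exact hρx.2 hx.1
  have hρs : ρ x ∈ sphere (r • e) (dist x (r • e)) := by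
    rw [mem_sphere]
    nth_rewrite 1 [← hρc]
    exact ρ.dist_eq _ _
  -- caps of `C r` and `B` about the same center are nested
  rcases (hC r hr0).nested (IsCapSymmOf.ball he hr0 R) hxt with h | h
  · exact hx.2 (h ⟨hx.1, rfl⟩).1
  · exact hρx.2 (h ⟨hρx.1, hρs⟩).1

end Auxiliary

/-- The truncated cap symmetrization space `𝒞^♯` is a `⋆`-compatible
symmetrization space on `(ℳ(ℝ^d), d₁)`; in particular, every measurable set of finite
measure fixed (up to null sets) by all its elements coincides with its spherical
nonincreasing rearrangement up to a null set. -/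
theorem statement18 {d : ℕ} (hd : 1 ≤ d)
    (e : Euc d) (he : ‖e‖ = 1)
    (cap : Euc d → ℝ → Set (Euc d) → Set (Euc d))
    (hcap : ∀ v : Euc d, ‖v‖ = 1 → ∀ r : ℝ, 0 ≤ r → ∀ X : Set (Euc d), MeasurableSet X →
      IsCapSymmOf v r X (cap v r X))
    (star : Set (Euc d) → Set (Euc d)) (hstar : IsSphericalRearrangement star) :
    -- nonexpansiveness
    (∀ (p : Bool × ℝ≥0) (A B : Set (Euc d)),
      MeasurableSet A → volume A < ⊤ → MeasurableSet B → volume B < ⊤ →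
      volume (symmDiff (truncCapAct cap e p A) (truncCapAct cap e p B)) ≤
        volume (symmDiff A B)) ∧
    -- idempotence (in `ℳ(ℝ^d)`)
    (∀ (p : Bool × ℝ≥0) (A : Set (Euc d)), MeasurableSet A → volume A < ⊤ →
      volume (symmDiff (truncCapAct cap e p (truncCapAct cap e p A))
        (truncCapAct cap e p A)) = 0) ∧
    -- continuity of the action in `(X, s)`
    (∀ (A : Set (Euc d)), MeasurableSet A → volume A < ⊤ →
      ∀ (b : Bool) (r : ℝ≥0) (ε : ℝ), 0 < ε → ∃ δ : ℝ, 0 < δ ∧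
        ∀ (B : Set (Euc d)) (t : ℝ≥0), MeasurableSet B → volume B < ⊤ →
          volume (symmDiff A B) < ENNReal.ofReal δ → |(r : ℝ) - (t : ℝ)| < δ →
          volume (symmDiff (truncCapAct cap e (b, r) A) (truncCapAct cap e (b, t) B)) <
            ENNReal.ofReal ε) ∧
    -- `⋆`-compatibility: the algebraic relations
    (∀ (p : Bool × ℝ≥0) (A : Set (Euc d)), MeasurableSet A → volume A < ⊤ →
      volume (symmDiff (star (truncCapAct cap e p A)) (star A)) = 0 ∧
      volume (symmDiff (truncCapAct cap e p (star A)) (star A)) = 0) ∧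
    -- `⋆`-compatibility: sets fixed by all elements of `𝒞^♯` are symmetric
    (∀ A : Set (Euc d), MeasurableSet A → volume A < ⊤ →
      (∀ p : Bool × ℝ≥0, volume (symmDiff (truncCapAct cap e p A) A) = 0) →
      volume (symmDiff A (star A)) = 0) := by
  have hrep : ∀ (p : Bool × ℝ≥0), ∃ (v : Euc d) (r : ℝ), ‖v‖ = 1 ∧ 0 ≤ r ∧
      ∀ X, truncCapAct cap e p X = cap v r X := by
    rintro ⟨b, r⟩
    cases b
    · exact ⟨-e, 0, by rwa [norm_neg], le_rfl, fun X => by simp [truncCapAct]⟩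
    · exact ⟨e, r, he, r.2, fun X => by simp [truncCapAct]⟩
  have hnon : ∀ (p : Bool × ℝ≥0) (A B : Set (Euc d)), MeasurableSet A → MeasurableSet B →
      volume (symmDiff (truncCapAct cap e p A) (truncCapAct cap e p B)) ≤
        volume (symmDiff A B) := by
    intro p A B hA hB
    obtain ⟨v, r, hv, hr, hp⟩ := hrep p
    rw [hp, hp]
    exact (hcap v hv r hr A hA).nonexpansive hd (hcap v hv r hr B hB) hA hB
  refine ⟨fun p A B hA _ hB _ => hnon p A B hA hB, ?_, ?_, ?_, ?_⟩
  · intro p A hA _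
    obtain ⟨v, r, hv, hr, hp⟩ := hrep p
    have h1 := hcap v hv r hr A hA
    rw [hp, hp]
    exact (hcap v hv r hr _ h1.1).unique hd h1.self h1.1
  · intro A hA hAf b r ε hε
    rcases b with _ | _
    · refine ⟨ε, hε, fun B t hB _ hAB _ => ?_⟩
      have h : truncCapAct cap e (false, t) B = truncCapAct cap e (false, r) B := by
        simp [truncCapAct]
      rw [h]
      exact (hnon _ A B hA hB).trans_lt hAB
    · have hε3 : 0 < ENNReal.ofReal (ε / 3) := ENNReal.ofReal_pos.2 (by positivity)
      have hC := hcap e he r r.2 A hA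
      obtain ⟨δ, hδ, hball⟩ := Metric.eventually_nhds_iff.1
        (((tendsto_translate e r hA hAf).eventually (gt_mem_nhds hε3)).and
          ((tendsto_translate e r hC.1 (hC.volume_eq hd hA ▸ hAf)).eventually (gt_mem_nhds hε3)))
      refine ⟨min δ (ε / 3), lt_min hδ (by positivity), fun B t hB hBf hAB hrt => ?_⟩
      obtain ⟨h1, h2⟩ := hball (y := (t : ℝ))
        (by rw [Real.dist_eq, abs_sub_comm]; exact hrt.trans_le (min_le_left _ _))
      have hD := hcap e he t t.2 B hB
      have h3 : volume (symmDiff A B) < ENNReal.ofReal (ε / 3) :=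
        hAB.trans_le (ENNReal.ofReal_le_ofReal (min_le_right _ _))
      simp only [truncCapAct, if_true]
      set T : ℝ → Set (Euc d) → Set (Euc d) := fun s X => (s • e + ·) ⁻¹' X with hT
      have hTm : ∀ s X, MeasurableSet X → MeasurableSet (T s X) :=
        fun s X hX => (measurable_const_add _) hX
      have hTv : ∀ s X Y, volume (symmDiff (T s X) (T s Y)) = volume (symmDiff X Y) := by
        intro s X Y
        rw [hT, ← Set.preimage_symmDiff, measure_preimage_add]
      -- Shift the pole to the origin, where both symmetrizations are about the same point; only
      -- continuity of the translates of `A` and of its symmetrization is then needed.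
      calc volume (symmDiff (cap e r A) (cap e t B))
          = volume (symmDiff (T t (cap e r A)) (T t (cap e t B))) := (hTv _ _ _).symm
        _ ≤ volume (symmDiff (T t (cap e r A)) (T r (cap e r A))) +
            volume (symmDiff (T r (cap e r A)) (T t (cap e t B))) := measure_symmDiff_le _ _ _
        _ ≤ volume (symmDiff (T t (cap e r A)) (T r (cap e r A))) +
            volume (symmDiff (T r A) (T t B)) := by
          refine add_le_add le_rfl ?_
          exact hC.translate.nonexpansive hd hD.translate (hTm _ _ hA) (hTm _ _ hB)
        _ ≤ volume (symmDiff (T t (cap e r A)) (T r (cap e r A))) +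
            (volume (symmDiff (T t A) (T r A)) + volume (symmDiff A B)) := by
          refine add_le_add le_rfl ?_
          rw [symmDiff_comm (T t A), ← hTv t A B]
          exact measure_symmDiff_le _ _ _
        _ < ENNReal.ofReal (ε / 3) + (ENNReal.ofReal (ε / 3) + ENNReal.ofReal (ε / 3)) :=
          ENNReal.add_lt_add h2 (ENNReal.add_lt_add h1 h3)
        _ = ENNReal.ofReal ε := by
          rw [← ENNReal.ofReal_add (by positivity) (by positivity),
            ← ENNReal.ofReal_add (by positivity) (by positivity)]
          congr 1; ring
  · intro p A hA hAf
    obtain ⟨v, r, hv, hr, hp⟩ := hrep p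
    have hC := hcap v hv r hr A hA
    have hv' := hC.volume_eq hd hA
    obtain ⟨⟨R, hR⟩, hRv⟩ := hstar A hA hAf
    rw [hp, hp]
    constructor
    · obtain ⟨⟨R', hR'⟩, hRv'⟩ := hstar _ hC.1 (hv' ▸ hAf)
      have hvol : volume (star (cap v r A)) = volume (star A) := by rw [hRv', hRv, hv']
      have hfin : volume (star A) ≠ ⊤ := by rw [hRv]; exact hAf.ne
      rw [measure_symmDiff_eq_zero_iff]
      rw [hR, hR'] at hvol ⊢
      rw [hR] at hfin
      rcases le_total R R' with h | h
      · exact (ae_eq_of_subset_of_measure_ge (Metric.ball_subset_ball h) hvol.le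
          measurableSet_ball.nullMeasurableSet (hvol ▸ hfin)).symm
      · exact ae_eq_of_subset_of_measure_ge (Metric.ball_subset_ball h) hvol.ge
          measurableSet_ball.nullMeasurableSet hfin
    · rw [hR]
      exact (hcap v hv r hr _ measurableSet_ball).unique hd (IsCapSymmOf.ball hv hr R)
        measurableSet_ball
  · intro A hA hAf hfix
    obtain ⟨⟨R, hR⟩, hRv⟩ := hstar A hA hAf
    rw [hR] at hRv ⊢
    refine fixed_eq_ball hd he hA hAf hRv (fun r => cap e r A) (fun r hr => hcap e he r hr A hA)
      (fun r hr => ?_) (hcap (-e) (by rwa [norm_neg]) 0 le_rfl A hA) ?_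
    · exact hfix (true, ⟨r, hr⟩)
    · simpa [truncCapAct] using hfix (false, 0)
end
end
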